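/- arXiv:2509.11531 — 5 statements merged into one kernel-verified Lean document; each statement's English description precedes it below -/
import Mathlib

section
/- Let x̄ be a stationary point of (P) and λ̄ ∈ Λ(x̄), suppose the SOSC holds at (x̄, λ̄), and let c̄, l, ε > 0 be constants for which the uniform quadratic growth condition 𝓛(x, λ, c) ≥ 𝓛(x̄, λ, c) + (κ/2)‖x − x̄‖² holds for all x ∈ B_ε(x̄), λ ∈ Λ(x̄) ∩ B_ε(λ̄), c ≥ c̄ and κ ∈ [0, l). Then there exist positive constants l̂ and ε̂ ∈ (0, ε) such that for every c ≥ c̄ the local optimal solution mapping S_c(λ, v) := argmin over x ∈ B_{ε̂}(x̄) of {𝓛(x, λ, c) + (1/(2c))‖x − v‖²} satisfies the uniform isolated calmness property S_c(λ, v) ⊆ {x̄} + l̂(‖λ − λ̄‖ + ‖v − x̄‖)𝔹_X, together with ∅ ≠ S_c(λ, v) ⊆ int B_{ε̂}(x̄), for all λ ∈ B_{ε̂/(3l̂)}(λ̄) and all v ∈ B_{ε̂/(3l̂)}(x̄). -/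
open Metric Set Filter Topology Asymptotics
open scoped RealInnerProductSpace

noncomputable section

variable {X H : Type*} [NormedAddCommGroup X] [InnerProductSpace ℝ X] [FiniteDimensional ℝ X]
variable [NormedAddCommGroup H] [InnerProductSpace ℝ H] [FiniteDimensional ℝ H]

/-- The normal cone to a convex set `K` at `y` (empty if `y ∉ K`). -/
def normalCone (K : Set H) (y : H) : Set H :=
  {v | y ∈ K ∧ ∀ z ∈ K, ⟪v, z - y⟫ ≤ 0}

/-- The gradient in `x` of the Lagrangian `L(x, λ) = f(x) + ⟨λ, g(x)⟩`,
i.e. `∇f(x) + ∇g(x)* λ`. -/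
def gradLx (f : X → ℝ) (g : X → H) (x : X) (lam : H) : X :=
  gradient f x + ContinuousLinearMap.adjoint (fderiv ℝ g x) lam

/-- The set of Lagrange multipliers `Λ(x̄)`. -/
def Lambda (f : X → ℝ) (g : X → H) (K : Set H) (xbar : X) : Set H :=
  {lam | gradLx f g xbar lam = 0 ∧ lam ∈ normalCone K (g xbar)}

/-- The augmented Lagrangian `𝓛(x, λ, c)`. -/
def augLag (f : X → ℝ) (g : X → H) (K : Set H) (x : X) (lam : H) (c : ℝ) : ℝ :=
  f x + c / 2 * (infDist (g x + c⁻¹ • lam) K) ^ 2 - 1 / (2 * c) * ‖lam‖ ^ 2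

/-- The support function `σ(y, C)`. -/
def suppFn (y : H) (C : Set H) : ℝ := sSup ((fun z => ⟪y, z⟫) '' C)

/-- The second-order tangent set `T²_K(y, h)`. -/
def secondTangentSet (K : Set H) (y h : H) : Set H :=
  {w | (fun t : ℝ => infDist (y + t • h + (t ^ 2 / 2) • w) K) =o[𝓝[>] (0:ℝ)] fun t => t ^ 2}

/-- The critical cone `C(x̄)`. -/
def criticalCone (g : X → H) (K : Set H) (xbar : X) (lambar : H) : Set X :=
  {d | fderiv ℝ g xbar d ∈ tangentConeAt ℝ K (g xbar) ∧ ⟪fderiv ℝ g xbar d, lambar⟫ = 0}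

/-- The second-order sufficient condition (SOSC) at `(x̄, λ̄)`. -/
def SOSC (f : X → ℝ) (g : X → H) (K : Set H) (xbar : X) (lambar : H) : Prop :=
  ∀ d ∈ criticalCone g K xbar lambar, d ≠ 0 →
    0 < iteratedFDeriv ℝ 2 (fun x => f x + ⟪lambar, g x⟫) xbar ![d, d]
        - suppFn lambar (secondTangentSet K (g xbar) (fderiv ℝ g xbar d))

/-- `K` is `C²`-cone reducible: near every point of `K` it is the preimage of a pointed
closed convex cone under a twice continuously differentiable map with surjective derivative. -/
def C2ConeReducible (K : Set H) : Prop :=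
  ∀ y₀ ∈ K, ∃ (n : ℕ) (C : Set (EuclideanSpace ℝ (Fin n))) (N : Set H)
    (Θ : H → EuclideanSpace ℝ (Fin n)),
    IsClosed C ∧ Convex ℝ C ∧ (∀ r : ℝ, 0 ≤ r → ∀ z ∈ C, r • z ∈ C) ∧
    C ∩ (-C) ⊆ {0} ∧
    IsOpen N ∧ y₀ ∈ N ∧ ContDiffOn ℝ 2 Θ N ∧ Θ y₀ = 0 ∧
    Function.Surjective (fderiv ℝ Θ y₀) ∧ K ∩ N = Θ ⁻¹' C ∩ N

/-- The set of minimizers of `φ` over `B`. -/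
def argminOn (φ : X → ℝ) (B : Set X) : Set X := {x ∈ B | ∀ y ∈ B, φ x ≤ φ y}

/-!
For convex `K`, the function `½ dist²(·, K)` has a nonexpansive gradient, so its mixed second
differences satisfy `½ (d²(a + p) + d²(a + q) - d²(a) - d²(a + p + q)) ≤ ‖p‖ ‖q‖`. Hence replacing
`lambar` by `lam` lowers the increment of the augmented Lagrangian from `xbar` to `x` by at most
`‖g x - g xbar‖ ‖lam - lambar‖`, uniformly in `c`, and the proximal term lowers it by at most
`c⁻¹ ‖x - xbar‖ ‖v - xbar‖`. As `g` is calm at `xbar`, the subproblem is a perturbation, of slope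
proportional to `‖lam - lambar‖ + ‖v - xbar‖`, of a function with quadratic growth at `xbar`, which
confines its minimizers to a ball around `xbar` whose radius is proportional to the slope.
-/

section InfDist

theorem le_sq_infDist {α : Type*} [PseudoMetricSpace α] {s : Set α} {x : α} {r : ℝ}
    (hs : s.Nonempty) (h : ∀ y ∈ s, r ≤ dist x y ^ 2) : r ≤ infDist x s ^ 2 :=
  (Real.sqrt_le_left infDist_nonneg).1 <|
    (le_infDist hs).2 fun y hy => (Real.sqrt_le_left dist_nonneg).2 (h y hy)

variable {E : Type*} [NormedAddCommGroup E] [InnerProductSpace ℝ E] {K : Set E}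

theorem neg_real_inner_le_sq_norm_sub_div_four (x y : E) : -⟪x, y⟫ ≤ ‖x - y‖ ^ 2 / 4 := by
  linarith [norm_add_sq_real x y, norm_sub_sq_real x y, sq_nonneg ‖x + y‖]

theorem sq_norm_add_add_sq_norm_add_sub (b x y : E) :
    ‖b + x‖ ^ 2 + ‖b + y‖ ^ 2 - ‖b‖ ^ 2 - ‖b + (x + y)‖ ^ 2 = -2 * ⟪x, y⟫ := by
  simp only [norm_add_sq_real, inner_add_right]
  ring

-- `a + α • u` is compared with `β • w + α • z`, and `a + β • v` with `α • w + β • z`.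
theorem sq_infDist_add_smul_add_sq_infDist_add_smul_le_of_mem (hK : Convex ℝ K) {w z : E}
    (hw : w ∈ K) (hz : z ∈ K) (a u v : E) {α β : ℝ} (hα : 0 ≤ α) (hβ : 0 ≤ β) (hαβ : α + β = 1) :
    infDist (a + α • u) K ^ 2 + infDist (a + β • v) K ^ 2 ≤
      dist a w ^ 2 + dist (a + α • u + β • v) z ^ 2 + α * β / 2 * ‖u - v‖ ^ 2 := by
  obtain rfl : β = 1 - α := by linarith
  set d := z - w with hd
  have hu : infDist (a + α • u) K ≤ ‖a - w + α • (u - d)‖ := by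
    convert infDist_le_dist_of_mem (hK hw hz hβ hα (by ring)) using 1
    rw [dist_eq_norm, hd]
    congr 1
    module
  have hv : infDist (a + (1 - α) • v) K ≤ ‖a - w + (1 - α) • (v - d)‖ := by
    convert infDist_le_dist_of_mem (hK hw hz hα hβ (by ring)) using 1
    rw [dist_eq_norm, hd]
    congr 1
    module
  have hz_dist : dist (a + α • u + (1 - α) • v) z =
      ‖a - w + (α • (u - d) + (1 - α) • (v - d))‖ := by
    rw [dist_eq_norm, hd]
    congr 1
    module
  have h_inner : -⟪α • (u - d), (1 - α) • (v - d)⟫ ≤ α * (1 - α) * (‖u - v‖ ^ 2 / 4) := by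
    calc -⟪α • (u - d), (1 - α) • (v - d)⟫ = α * (1 - α) * -⟪u - d, v - d⟫ := by
          rw [real_inner_smul_left, real_inner_smul_right]
          ring
      _ ≤ α * (1 - α) * (‖u - v‖ ^ 2 / 4) := by
          gcongr
          simpa only [sub_sub_sub_cancel_right] using
            neg_real_inner_le_sq_norm_sub_div_four (u - d) (v - d)
  rw [hz_dist, dist_eq_norm]
  linarith [pow_le_pow_left₀ infDist_nonneg hu 2, pow_le_pow_left₀ infDist_nonneg hv 2,
    sq_norm_add_add_sq_norm_add_sub (a - w) (α • (u - d)) ((1 - α) • (v - d))]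

theorem sq_infDist_add_smul_add_sq_infDist_add_smul_le (hne : K.Nonempty) (hK : Convex ℝ K)
    (a u v : E) {α β : ℝ} (hα : 0 ≤ α) (hβ : 0 ≤ β) (hαβ : α + β = 1) :
    infDist (a + α • u) K ^ 2 + infDist (a + β • v) K ^ 2 ≤
      infDist a K ^ 2 + infDist (a + α • u + β • v) K ^ 2 + α * β / 2 * ‖u - v‖ ^ 2 := by
  have h_inf_w : ∀ z ∈ K, infDist (a + α • u) K ^ 2 + infDist (a + β • v) K ^ 2
      - dist (a + α • u + β • v) z ^ 2 - α * β / 2 * ‖u - v‖ ^ 2 ≤ infDist a K ^ 2 :=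
    fun z hz => le_sq_infDist hne fun w hw => by
      linarith [sq_infDist_add_smul_add_sq_infDist_add_smul_le_of_mem hK hw hz a u v hα hβ hαβ]
  have h_inf_z : infDist (a + α • u) K ^ 2 + infDist (a + β • v) K ^ 2
      - infDist a K ^ 2 - α * β / 2 * ‖u - v‖ ^ 2 ≤ infDist (a + α • u + β • v) K ^ 2 :=
    le_sq_infDist hne fun z hz => by linarith [h_inf_w z hz]
  linarith

-- With weights proportional to `‖p‖` and `‖q‖`, the rescaled increments have the same norm.
theorem sq_infDist_add_add_sq_infDist_add_le (hne : K.Nonempty) (hK : Convex ℝ K)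
    (a p q : E) :
    infDist (a + p) K ^ 2 + infDist (a + q) K ^ 2 ≤
      infDist a K ^ 2 + infDist (a + p + q) K ^ 2 + 2 * (‖p‖ * ‖q‖) := by
  rcases eq_or_ne p 0 with rfl | hp
  · simp
  rcases eq_or_ne q 0 with rfl | hq
  · simp [add_comm]
  have hp' : 0 < ‖p‖ := norm_pos_iff.2 hp
  have hq' : 0 < ‖q‖ := norm_pos_iff.2 hq
  set s := ‖p‖ + ‖q‖ with hs
  have hs' : 0 < s := by positivity
  have h := sq_infDist_add_smul_add_sq_infDist_add_smul_le hne hK a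
    ((s / ‖p‖) • p) ((s / ‖q‖) • q) (α := ‖p‖ / s) (β := ‖q‖ / s)
    (by positivity) (by positivity) (by field_simp; exact hs.symm)
  have h_dist : ‖(s / ‖p‖) • p - (s / ‖q‖) • q‖ ≤ 2 * s := by
    calc ‖(s / ‖p‖) • p - (s / ‖q‖) • q‖
        ≤ ‖(s / ‖p‖) • p‖ + ‖(s / ‖q‖) • q‖ := norm_sub_le _ _
      _ = 2 * s := by
        rw [norm_smul_of_nonneg (by positivity), norm_smul_of_nonneg (by positivity)]
        field_simp
        ring
  rw [smul_smul, smul_smul, div_mul_div_cancel₀ hs'.ne', div_mul_div_cancel₀ hs'.ne',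
    div_self hp'.ne', div_self hq'.ne', one_smul, one_smul] at h
  calc _ ≤ _ := h
    _ ≤ infDist a K ^ 2 + infDist (a + p + q) K ^ 2
        + ‖p‖ / s * (‖q‖ / s) / 2 * (2 * s) ^ 2 := by gcongr
    _ = _ := by field_simp

end InfDist

theorem sq_norm_sub_sub_sq_norm_sub_le {E : Type*} [SeminormedAddCommGroup E] (x y v : E) :
    ‖y - v‖ ^ 2 - ‖x - v‖ ^ 2 ≤ 2 * (‖x - y‖ * ‖v - y‖) := by
  have h := norm_sub_le_norm_sub_add_norm_sub y x v
  rw [norm_sub_rev y x] at h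
  rw [norm_sub_rev v y]
  linarith [mul_le_mul_of_nonneg_left h (norm_nonneg (y - v)), sq_nonneg (‖y - v‖ - ‖x - v‖)]

theorem dist_le_of_quadratic_growth_of_perturbation {α : Type*} [PseudoMetricSpace α]
    {φ ψ : α → ℝ} {x u : α} {κ M : ℝ} (hκ : 0 < κ) (hM : 0 ≤ M)
    (hgrowth : φ x + κ / 2 * dist u x ^ 2 ≤ φ u) (hle : ψ u ≤ ψ x)
    (hpert : (φ u - φ x) - (ψ u - ψ x) ≤ M * dist u x) : dist u x ≤ 2 / κ * M := by
  rcases (dist_nonneg (x := u) (y := x)).eq_or_lt with h0 | hpos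
  · rw [← h0]
    positivity
  have h : κ / 2 * dist u x ≤ M := le_of_mul_le_mul_right (by linarith) hpos
  calc dist u x = 2 / κ * (κ / 2 * dist u x) := by field_simp
    _ ≤ 2 / κ * M := by gcongr

theorem mul_add_lt_of_le_div_three_mul {a b δ l : ℝ} (hδ : 0 < δ) (hl : 0 < l)
    (ha : a ≤ δ / (3 * l)) (hb : b ≤ δ / (3 * l)) : l * (a + b) < δ :=
  calc l * (a + b) ≤ l * (δ / (3 * l) + δ / (3 * l)) := by gcongr
    _ = 2 / 3 * δ := by field_simp; ring
    _ < δ := by linarith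

theorem exists_closedBall_norm_sub_le_of_isBigO {E F : Type*} [SeminormedAddCommGroup E]
    [SeminormedAddCommGroup F] {g : E → F} {x : E} (hg : (g · - g x) =O[𝓝 x] (· - x))
    {ε : ℝ} (hε : 0 < ε) :
    ∃ L : ℝ, ∃ δ > 0, δ < ε ∧ ∀ y ∈ closedBall x δ, ‖g y - g x‖ ≤ L * ‖y - x‖ := by
  obtain ⟨L, hL⟩ := hg.bound
  obtain ⟨r, hr, hball⟩ := nhds_basis_closedBall.eventually_iff.1 hL
  refine ⟨L, min r (ε / 2), by positivity, (min_le_right _ _).trans_lt (half_lt_self hε), ?_⟩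
  exact fun y hy => hball (closedBall_subset_closedBall (min_le_left _ _) hy)

section Subproblem

variable {E F : Type*} [SeminormedAddCommGroup E] [NormedAddCommGroup F] [InnerProductSpace ℝ F]
  {K : Set F}

theorem augLag_increment_sub_augLag_increment_le {α : Type*} {f : α → ℝ} {g : α → F}
    (hne : K.Nonempty) (hK : Convex ℝ K) {c : ℝ} (hc : 0 < c) (x y : α) (lam mu : F) :
    (augLag f g K x mu c - augLag f g K y mu c) - (augLag f g K x lam c - augLag f g K y lam c) ≤
      ‖g x - g y‖ * ‖lam - mu‖ := by
  have h := sq_infDist_add_add_sq_infDist_add_le hne hK (g y + c⁻¹ • mu) (g x - g y)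
    (c⁻¹ • (lam - mu))
  have hx_mu : g y + c⁻¹ • mu + (g x - g y) = g x + c⁻¹ • mu := by abel
  have hy_lam : g y + c⁻¹ • mu + c⁻¹ • (lam - mu) = g y + c⁻¹ • lam := by module
  have hx_lam : g x + c⁻¹ • mu + c⁻¹ • (lam - mu) = g x + c⁻¹ • lam := by module
  rw [hx_mu, hy_lam, hx_lam, norm_smul_of_nonneg (inv_nonneg.2 hc.le)] at h
  have h_scaled := mul_le_mul_of_nonneg_left h (half_pos hc).le
  have h_cancel : c / 2 * (2 * (‖g x - g y‖ * (c⁻¹ * ‖lam - mu‖))) = ‖g x - g y‖ * ‖lam - mu‖ := by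
    field_simp
  simp only [augLag]
  linarith

/-- The objective of the subproblem of the proximal augmented Lagrangian method (PALM): the
augmented Lagrangian regularized by the proximal term `(1 / (2c)) ‖x - v‖²` centred at `v`. -/
def palmObjective (f : E → ℝ) (g : E → F) (K : Set F) (lam : F) (v : E) (c : ℝ) (x : E) : ℝ :=
  augLag f g K x lam c + 1 / (2 * c) * ‖x - v‖ ^ 2

variable {f : E → ℝ} {g : E → F}

theorem augLag_increment_sub_palmObjective_increment_le (hne : K.Nonempty) (hK : Convex ℝ K)
    {c : ℝ} (hc : 0 < c) (x y v : E) (lam mu : F) :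
    (augLag f g K x mu c - augLag f g K y mu c)
        - (palmObjective f g K lam v c x - palmObjective f g K lam v c y) ≤
      ‖g x - g y‖ * ‖lam - mu‖ + c⁻¹ * (‖x - y‖ * ‖v - y‖) := by
  have h_prox : 1 / (2 * c) * (‖y - v‖ ^ 2 - ‖x - v‖ ^ 2) ≤ c⁻¹ * (‖x - y‖ * ‖v - y‖) :=
    calc 1 / (2 * c) * (‖y - v‖ ^ 2 - ‖x - v‖ ^ 2)
        ≤ 1 / (2 * c) * (2 * (‖x - y‖ * ‖v - y‖)) := by
          gcongr
          exact sq_norm_sub_sub_sq_norm_sub_le x y v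
      _ = c⁻¹ * (‖x - y‖ * ‖v - y‖) := by field_simp
  simp only [palmObjective]
  linarith [augLag_increment_sub_augLag_increment_le (f := f) (g := g) hne hK hc x y lam mu]

theorem norm_sub_le_of_palmObjective_le (hne : K.Nonempty) (hK : Convex ℝ K) {c κ L : ℝ}
    (hc : 0 < c) (hκ : 0 < κ) (hcL : c⁻¹ ≤ L) {xbar u v : E} {lam lambar : F}
    (hcalm : ‖g u - g xbar‖ ≤ L * ‖u - xbar‖)
    (hgrowth : augLag f g K xbar lambar c + κ / 2 * ‖u - xbar‖ ^ 2 ≤ augLag f g K u lambar c)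
    (hle : palmObjective f g K lam v c u ≤ palmObjective f g K lam v c xbar) :
    ‖u - xbar‖ ≤ 2 / κ * L * (‖lam - lambar‖ + ‖v - xbar‖) := by
  have hL : 0 ≤ L := (inv_pos.2 hc).le.trans hcL
  have hpert := calc
    (augLag f g K u lambar c - augLag f g K xbar lambar c)
        - (palmObjective f g K lam v c u - palmObjective f g K lam v c xbar)
      ≤ ‖g u - g xbar‖ * ‖lam - lambar‖ + c⁻¹ * (‖u - xbar‖ * ‖v - xbar‖) :=
        augLag_increment_sub_palmObjective_increment_le hne hK hc u xbar v lam lambar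
    _ ≤ L * ‖u - xbar‖ * ‖lam - lambar‖ + L * (‖u - xbar‖ * ‖v - xbar‖) := by gcongr
    _ = L * (‖lam - lambar‖ + ‖v - xbar‖) * ‖u - xbar‖ := by ring
  rw [← dist_eq_norm u] at hgrowth hpert ⊢
  rw [mul_assoc]
  exact dist_le_of_quadratic_growth_of_perturbation
    (φ := fun x => augLag f g K x lambar c) hκ (by positivity) hgrowth hle hpert

theorem argminOn_palmObjective_nonempty {s : Set E} (hs : IsCompact s) (hsne : s.Nonempty)
    (hf : LowerSemicontinuousOn f s) (hg : ContinuousOn g s) (lam : F) (v : E) (c : ℝ) :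
    (argminOn (palmObjective f g K lam v c) s).Nonempty := by
  have h_dist : ContinuousOn (fun x => infDist (g x + c⁻¹ • lam) K) s :=
    (continuous_infDist_pt K).comp_continuousOn (by fun_prop)
  have h_rest : ContinuousOn (fun x => c / 2 * infDist (g x + c⁻¹ • lam) K ^ 2
      - 1 / (2 * c) * ‖lam‖ ^ 2 + 1 / (2 * c) * ‖x - v‖ ^ 2) s := by
    fun_prop
  have h_split : palmObjective f g K lam v c = fun x => f x +
      (c / 2 * infDist (g x + c⁻¹ • lam) K ^ 2 - 1 / (2 * c) * ‖lam‖ ^ 2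
        + 1 / (2 * c) * ‖x - v‖ ^ 2) := by
    funext x
    simp only [palmObjective, augLag]
    ring
  have h_lsc : LowerSemicontinuousOn (palmObjective f g K lam v c) s :=
    h_split ▸ hf.add h_rest.lowerSemicontinuousOn
  obtain ⟨u, hu, hmin⟩ := h_lsc.exists_isMinOn hsne hs
  exact ⟨u, hu, fun y hy => hmin hy⟩

theorem palm_subproblem_solvability_general
    [ProperSpace E] {xbar : E} {lambar : F} {cbar κ ε : ℝ}
    (hf : LowerSemicontinuousOn f (closedBall xbar ε)) (hg : ContinuousOn g (closedBall xbar ε))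
    (hcalm : (g · - g xbar) =O[𝓝 xbar] (· - xbar))
    (hKne : K.Nonempty) (hKconv : Convex ℝ K)
    (hcbar : 0 < cbar) (hκ : 0 < κ) (hε : 0 < ε)
    (hgrowth : ∀ x ∈ closedBall xbar ε, ∀ c ≥ cbar,
      augLag f g K xbar lambar c + κ / 2 * ‖x - xbar‖ ^ 2 ≤ augLag f g K x lambar c) :
    ∃ lhat > (0 : ℝ), ∃ εhat > (0 : ℝ), εhat < ε ∧
      ∀ c ≥ cbar, ∀ lam ∈ closedBall lambar (εhat / (3 * lhat)),
        ∀ v ∈ closedBall xbar (εhat / (3 * lhat)),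
          (argminOn (palmObjective f g K lam v c) (closedBall xbar εhat)).Nonempty ∧
          argminOn (palmObjective f g K lam v c) (closedBall xbar εhat) ⊆
            interior (closedBall xbar εhat) ∧
          ∀ u ∈ argminOn (palmObjective f g K lam v c) (closedBall xbar εhat),
            ‖u - xbar‖ ≤ lhat * (‖lam - lambar‖ + ‖v - xbar‖) := by
  obtain ⟨L, δ, hδ, hδε, hL⟩ := exists_closedBall_norm_sub_le_of_isBigO hcalm hε
  set A := max L cbar⁻¹
  have hApos : 0 < A := (inv_pos.2 hcbar).trans_le (le_max_right _ _)
  have hsub : closedBall xbar δ ⊆ closedBall xbar ε := closedBall_subset_closedBall hδε.le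
  have hxbar : xbar ∈ closedBall xbar δ := mem_closedBall_self hδ.le
  have hlhat : 0 < 2 / κ * A := mul_pos (by positivity) hApos
  refine ⟨2 / κ * A, hlhat, δ, hδ, hδε, fun c hc lam hlam v hv => ?_⟩
  have hcA : c⁻¹ ≤ A := (inv_anti₀ hcbar hc).trans (le_max_right _ _)
  have hbound : ∀ u ∈ argminOn (palmObjective f g K lam v c) (closedBall xbar δ),
      ‖u - xbar‖ ≤ 2 / κ * A * (‖lam - lambar‖ + ‖v - xbar‖) := fun u ⟨huB, hu⟩ =>
    norm_sub_le_of_palmObjective_le hKne hKconv (hcbar.trans_le hc) hκ hcA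
      ((hL u huB).trans (by gcongr; exact le_max_left _ _)) (hgrowth u (hsub huB) c hc)
      (hu xbar hxbar)
  refine ⟨argminOn_palmObjective_nonempty (isCompact_closedBall xbar δ) ⟨xbar, hxbar⟩
    (hf.mono hsub) (hg.mono hsub) lam v c, fun u hu => ball_subset_interior_closedBall ?_, hbound⟩
  exact mem_ball_iff_norm.2 <| (hbound u hu).trans_lt <| mul_add_lt_of_le_div_three_mul hδ hlhat
    (mem_closedBall_iff_norm.1 hlam) (mem_closedBall_iff_norm.1 hv)

end Subproblem

/-- **Proposition 3.1 (solvability and uniform isolated calmness of the PALM subproblem).** -/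
theorem palm_subproblem_solvability
    (f : X → ℝ) (g : X → H) (K : Set H)
    (hf : ContDiff ℝ 2 f) (hg : ContDiff ℝ 2 g)
    (hKne : K.Nonempty) (hKcl : IsClosed K) (hKconv : Convex ℝ K)
    (hKred : C2ConeReducible K)
    (xbar : X) (lambar : H) (hlam : lambar ∈ Lambda f g K xbar)
    (hSOSC : SOSC f g K xbar lambar)
    (cbar l ε : ℝ) (hcbar : 0 < cbar) (hl : 0 < l) (hε : 0 < ε)
    (hgrowth : ∀ x ∈ closedBall xbar ε, ∀ lam ∈ Lambda f g K xbar ∩ closedBall lambar ε,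
      ∀ c ≥ cbar, ∀ κ : ℝ, 0 ≤ κ → κ < l →
        augLag f g K xbar lam c + κ / 2 * ‖x - xbar‖ ^ 2 ≤ augLag f g K x lam c) :
    ∃ lhat > (0:ℝ), ∃ εhat > (0:ℝ), εhat < ε ∧
      ∀ c ≥ cbar, ∀ lam ∈ closedBall lambar (εhat / (3 * lhat)),
        ∀ v ∈ closedBall xbar (εhat / (3 * lhat)),
          (argminOn (fun x => augLag f g K x lam c + 1 / (2 * c) * ‖x - v‖ ^ 2) (closedBall xbar εhat)).Nonempty ∧
          argminOn (fun x => augLag f g K x lam c + 1 / (2 * c) * ‖x - v‖ ^ 2) (closedBall xbar εhat) ⊆ interior (closedBall xbar εhat) ∧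
          ∀ u ∈ argminOn (fun x => augLag f g K x lam c + 1 / (2 * c) * ‖x - v‖ ^ 2) (closedBall xbar εhat),
            ‖u - xbar‖ ≤ lhat * (‖lam - lambar‖ + ‖v - xbar‖) :=
  palm_subproblem_solvability_general hf.continuous.continuousOn.lowerSemicontinuousOn
    hg.continuous.continuousOn (hg.differentiable two_ne_zero xbar).isBigO_sub hKne hKconv hcbar
    (half_pos hl) hε fun x hx c hc =>
      hgrowth x hx lambar ⟨hlam, mem_closedBall_self hε.le⟩ c hc (l / 2) (half_pos hl).le
        (half_lt_self hl)
end
end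

section
/- Let (x̄, λ̄) be a KKT point of (P). The solution mapping S_KKT is semi-isolated calm at the origin for (x̄, λ̄) if and only if there exist ε > 0 and τ > 0 such that the estimate ‖x − x̄‖ + dist(λ, Λ(x̄)) ≤ τ · r(x, λ) holds for all pairs (x, λ) ∈ B_ε(x̄, λ̄). -/
open Metric Set Filter Topology Asymptotics
open scoped RealInnerProductSpace

noncomputable section

variable {X H : Type*} [NormedAddCommGroup X] [InnerProductSpace ℝ X] [FiniteDimensional ℝ X]
variable [NormedAddCommGroup H] [InnerProductSpace ℝ H] [FiniteDimensional ℝ H]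

/-- The KKT kktResidual `r(x, λ) = ‖∇ₓL(x, λ)‖ + ‖g(x) - Π_K(g(x) + λ)‖`. -/
def kktResidual (f : X → ℝ) (g : X → H) (projK : H → H) (x : X) (lam : H) : ℝ :=
  ‖gradLx f g x lam‖ + ‖g x - projK (g x + lam)‖

/-- The perturbed KKT solution mapping `S_KKT(a, b)`. -/
def SKKT (f : X → ℝ) (g : X → H) (K : Set H) (ab : X × H) : Set (X × H) :=
  {p | ab.1 = gradLx f g p.1 p.2 ∧ p.2 ∈ normalCone K (g p.1 + ab.2)}

/-- Semi-isolated calmness of `S_KKT` at the origin for `(x̄, λ̄)`. -/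
def SemiIsolatedCalm (f : X → ℝ) (g : X → H) (K : Set H) (xbar : X) (lambar : H) : Prop :=
  ∃ ε > (0:ℝ), ∃ δ > (0:ℝ), ∃ l > (0:ℝ), ∀ ab : X × H, ‖ab‖ ≤ δ →
    ∀ p ∈ SKKT f g K ab ∩ closedBall ((xbar, lambar) : X × H) ε,
      ∃ q : X × H, q.1 = xbar ∧ q.2 ∈ Lambda f g K xbar ∧
        ‖p - q‖ ≤ l * (‖ab.1‖ + ‖ab.2‖)

/-!
Put `b = Π_K(g(x) + λ) - g(x)`. Then `λ - b ∈ N_K(g(x) + b)`, so `(x, λ - b)` solves the system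
perturbed by `(∇ₓL(x, λ - b), b)`, whose size is controlled by `r(x, λ)` as long as `∇g` is bounded;
calmness applies to this pair if `r(x, λ)` is small, and if it is not, the error bound is trivial on
a bounded neighbourhood. Conversely, monotonicity of `N_K` shows that a solution of the system
perturbed by `(a, b)` has residual at most `‖a‖ + ‖b‖`.
-/

section ProductDist

variable {α β : Type*} [PseudoMetricSpace α] [PseudoMetricSpace β]

theorem dist_mk_le_dist_mk_add_dist (a : α) (b c : β) (p : α × β) :
    dist (a, c) p ≤ dist (a, b) p + dist b c :=
  calc dist (a, c) p ≤ dist (a, c) (a, b) + dist (a, b) p := dist_triangle _ _ _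
    _ = dist (a, b) p + dist b c := by rw [dist_prod_same_left, dist_comm c, add_comm]

theorem dist_add_infDist_le_two_mul_dist_mk_add_dist {S : Set β} {q : α × β} (hq : q.2 ∈ S)
    (a : α) (b c : β) : dist a q.1 + infDist b S ≤ 2 * dist (a, c) q + dist b c := by
  have hfst : dist a q.1 ≤ dist (a, c) q := le_max_left _ _
  have hsnd : dist c q.2 ≤ dist (a, c) q := le_max_right _ _
  linarith [infDist_le_dist_of_mem hq (x := b), dist_triangle b c q.2]

end ProductDist

section NormalCone

variable {E : Type*} [NormedAddCommGroup E] [InnerProductSpace ℝ E] {K : Set E}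

theorem isClosed_normalCone (K : Set E) (y : E) : IsClosed (normalCone K y) := by
  have normalCone_eq : normalCone K y = {_v | y ∈ K} ∩ ⋂ z ∈ K, {v : E | ⟪v, z - y⟫ ≤ 0} := by
    ext v
    simp [normalCone]
  rw [normalCone_eq]
  exact isClosed_const.inter <| isClosed_biInter fun z _ =>
    isClosed_le (by fun_prop) continuous_const

theorem inner_sub_sub_nonneg_of_mem_normalCone {y z u v : E}
    (hu : u ∈ normalCone K y) (hv : v ∈ normalCone K z) : 0 ≤ ⟪y - z, u - v⟫ := by
  have hu_le : ⟪u, z - y⟫ ≤ 0 := hu.2 z hv.1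
  have hv_le : ⟪v, y - z⟫ ≤ 0 := hv.2 y hu.1
  rw [← neg_sub y z, inner_neg_right] at hu_le
  rw [real_inner_comm, inner_sub_left]
  linarith

theorem norm_sub_le_norm_add_sub_add_of_mem_normalCone {y z u v : E}
    (hu : u ∈ normalCone K y) (hv : v ∈ normalCone K z) :
    ‖u - v‖ ≤ ‖(y + u) - (z + v)‖ := by
  rw [add_sub_add_comm]
  refine (sq_le_sq₀ (norm_nonneg _) (norm_nonneg _)).1 ?_
  rw [norm_add_sq_real]
  linarith [inner_sub_sub_nonneg_of_mem_normalCone hu hv, sq_nonneg ‖y - z‖]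

/-- `P` is a nearest-point projection onto `K`, given by its minimality: existence of nearest
points is built in, uniqueness is not. -/
def IsMetricProjection (K : Set E) (P : E → E) : Prop :=
  ∀ y, P y ∈ K ∧ ∀ z ∈ K, ‖y - P y‖ ≤ ‖y - z‖

namespace IsMetricProjection

variable {P : E → E}

theorem sub_mem_normalCone (hP : IsMetricProjection K P) (hK : Convex ℝ K) (y : E) :
    y - P y ∈ normalCone K (P y) := by
  obtain ⟨hmem, hmin⟩ := hP y
  have : Nonempty K := ⟨⟨P y, hmem⟩⟩
  have hbdd : BddBelow (range fun w : K => ‖y - w‖) :=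
    ⟨0, forall_mem_range.2 fun _ => norm_nonneg _⟩
  have norm_eq_iInf : ‖y - P y‖ = ⨅ w : K, ‖y - w‖ :=
    le_antisymm (le_ciInf fun w => hmin w w.2) (ciInf_le hbdd ⟨P y, hmem⟩)
  exact ⟨hmem, (norm_eq_iInf_iff_real_inner_le_zero hK hmem).1 norm_eq_iInf⟩

theorem norm_sub_apply_add_le (hP : IsMetricProjection K P) (hK : Convex ℝ K) {y b v : E}
    (hv : v ∈ normalCone K (y + b)) : ‖y - P (y + v)‖ ≤ ‖b‖ := by
  have h := norm_sub_le_norm_add_sub_add_of_mem_normalCone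
    (hP.sub_mem_normalCone hK (y + v)) hv
  calc ‖y - P (y + v)‖ = ‖y + v - P (y + v) - v‖ := by congr 1; abel
    _ ≤ ‖P (y + v) + (y + v - P (y + v)) - (y + b + v)‖ := h
    _ = ‖b‖ := by rw [← norm_neg b]; congr 1; abel

end IsMetricProjection

end NormalCone

section KKT

variable {f : X → ℝ} {g : X → H} {K : Set H} {projK : H → H} {xbar : X} {lambar : H}

theorem gradLx_sub (f : X → ℝ) (g : X → H) (x : X) (lam b : H) :
    gradLx f g x (lam - b) =
      gradLx f g x lam - ContinuousLinearMap.adjoint (fderiv ℝ g x) b := by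
  rw [gradLx, gradLx, map_sub, add_sub_assoc]

theorem norm_gradLx_sub_le (f : X → ℝ) (g : X → H) (x : X) (lam b : H) :
    ‖gradLx f g x (lam - b)‖ ≤ ‖gradLx f g x lam‖ + ‖fderiv ℝ g x‖ * ‖b‖ := by
  rw [gradLx_sub, ← LinearIsometryEquiv.norm_map ContinuousLinearMap.adjoint (fderiv ℝ g x)]
  exact (norm_sub_le _ _).trans (by gcongr; exact ContinuousLinearMap.le_opNorm _ _)

theorem isClosed_Lambda (f : X → ℝ) (g : X → H) (K : Set H) (x : X) :
    IsClosed (Lambda f g K x) := by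
  have continuous_gradLx : Continuous (gradLx f g x) := by
    unfold gradLx
    fun_prop
  exact (isClosed_eq continuous_gradLx continuous_const).inter (isClosed_normalCone K (g x))

theorem IsMetricProjection.kktResidual_le_of_mem_SKKT (hP : IsMetricProjection K projK)
    (hK : Convex ℝ K) {ab p : X × H} (hp : p ∈ SKKT f g K ab) :
    kktResidual f g projK p.1 p.2 ≤ ‖ab.1‖ + ‖ab.2‖ := by
  rw [kktResidual, ← hp.1]
  gcongr
  exact hP.norm_sub_apply_add_le hK hp.2

theorem IsMetricProjection.exists_mem_SKKT (hP : IsMetricProjection K projK)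
    (hK : Convex ℝ K) (f : X → ℝ) (g : X → H) (x : X) (lam : H) :
    ∃ (ab : X × H) (mu : H), (x, mu) ∈ SKKT f g K ab ∧
      ‖lam - mu‖ ≤ kktResidual f g projK x lam ∧
      ‖ab.1‖ + ‖ab.2‖ ≤ (‖fderiv ℝ g x‖ + 1) * kktResidual f g projK x lam := by
  set b := projK (g x + lam) - g x with hb
  have residual_eq : kktResidual f g projK x lam = ‖gradLx f g x lam‖ + ‖b‖ := by
    rw [kktResidual, hb, norm_sub_rev (g x)]
  have mem_normalCone : lam - b ∈ normalCone K (g x + b) := by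
    convert hP.sub_mem_normalCone hK (g x + lam) using 1
    · rw [hb, add_sub_cancel]
    · rw [hb]; abel
  refine ⟨(gradLx f g x (lam - b), b), lam - b, ⟨rfl, mem_normalCone⟩, ?_, ?_⟩
  · rw [sub_sub_cancel, residual_eq]
    exact le_add_of_nonneg_left (norm_nonneg _)
  · rw [residual_eq]
    linarith [norm_gradLx_sub_le f g x lam b,
      mul_nonneg (norm_nonneg (fderiv ℝ g x)) (norm_nonneg (gradLx f g x lam))]

/-- The local error bound `‖x - x̄‖ + dist(λ, Λ(x̄)) ≤ τ r(x, λ)` near `(x̄, λ̄)`. As in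
`SemiIsolatedCalm`, neighbourhoods are balls of the maximum norm on `X × H`. -/
def KKTErrorBound (f : X → ℝ) (g : X → H) (K : Set H) (projK : H → H) (xbar : X) (lambar : H) :
    Prop :=
  ∃ ε > (0 : ℝ), ∃ τ > (0 : ℝ), ∀ x : X, ∀ lam : H,
    dist (x, lam) ((xbar, lambar) : X × H) ≤ ε →
      ‖x - xbar‖ + infDist lam (Lambda f g K xbar) ≤ τ * kktResidual f g projK x lam

theorem KKTErrorBound.of_kktResidual_le (hlam : lambar ∈ Lambda f g K xbar) {ε ρ τ : ℝ}
    (hε : 0 < ε) (hρ : 0 < ρ)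
    (h : ∀ x lam, dist (x, lam) (xbar, lambar) ≤ ε → kktResidual f g projK x lam ≤ ρ →
      ‖x - xbar‖ + infDist lam (Lambda f g K xbar) ≤ τ * kktResidual f g projK x lam) :
    KKTErrorBound f g K projK xbar lambar := by
  refine ⟨ε, hε, max τ (2 * ε / ρ), lt_max_of_lt_right (by positivity), fun x lam hdist => ?_⟩
  have residual_nonneg : 0 ≤ kktResidual f g projK x lam := by
    unfold kktResidual
    positivity
  rcases le_total (kktResidual f g projK x lam) ρ with hsmall | hlarge
  · exact (h x lam hdist hsmall).trans (by gcongr; exact le_max_left _ _)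
  · calc ‖x - xbar‖ + infDist lam (Lambda f g K xbar)
      _ ≤ 2 * dist (x, lam) (xbar, lambar) := by
        simpa [dist_eq_norm] using dist_add_infDist_le_two_mul_dist_mk_add_dist
          (q := (xbar, lambar)) hlam x lam lam
      _ ≤ 2 * ε := by gcongr
      _ = 2 * ε / ρ * ρ := (div_mul_cancel₀ _ hρ.ne').symm
      _ ≤ max τ (2 * ε / ρ) * kktResidual f g projK x lam := by
        gcongr
        exact le_max_right _ _

theorem SemiIsolatedCalm.kktErrorBound (hcalm : SemiIsolatedCalm f g K xbar lambar)
    (hP : IsMetricProjection K projK) (hK : Convex ℝ K)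
    (hg : (𝓝 xbar).IsBoundedUnder (· ≤ ·) fun x => ‖fderiv ℝ g x‖)
    (hlam : lambar ∈ Lambda f g K xbar) : KKTErrorBound f g K projK xbar lambar := by
  obtain ⟨ε, hε, δ, hδ, l, hl, hcalm⟩ := hcalm
  obtain ⟨M, hM⟩ := hg.eventually_le
  obtain ⟨η, hη, hMη⟩ := nhds_basis_closedBall.eventually_iff.1 hM
  have hM0 : 0 ≤ M := (norm_nonneg _).trans hM.self_of_nhds
  refine .of_kktResidual_le hlam (ε := min η (ε / 2)) (ρ := min (δ / (M + 1)) (ε / 2))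
    (τ := 2 * (l * (M + 1)) + 1) (by positivity) (by positivity)
    fun x lam hdist hr => ?_
  obtain ⟨hdistη, hdistε⟩ := le_min_iff.1 hdist
  obtain ⟨hrδ, hrε⟩ := le_min_iff.1 hr
  obtain ⟨ab, mu, hmem, hmu, hab⟩ := hP.exists_mem_SKKT hK f g x lam
  set r := kktResidual f g projK x lam
  have hr0 : 0 ≤ r := (norm_nonneg _).trans hmu
  have hMx : ‖fderiv ℝ g x‖ ≤ M := hMη <| mem_closedBall.2 ((le_max_left _ _).trans hdistη)
  have hab_le : ‖ab.1‖ + ‖ab.2‖ ≤ (M + 1) * r := hab.trans (by gcongr)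
  have hab_small : ‖ab‖ ≤ δ :=
    calc ‖ab‖ ≤ ‖ab.1‖ + ‖ab.2‖ := max_le_add_of_nonneg (norm_nonneg _) (norm_nonneg _)
      _ ≤ (M + 1) * r := hab_le
      _ ≤ δ := (le_div_iff₀' (by positivity)).1 hrδ
  have hmem_ball : (x, mu) ∈ closedBall (xbar, lambar) ε := mem_closedBall.2 <| by
    linarith [dist_mk_le_dist_mk_add_dist x lam mu (xbar, lambar), dist_eq_norm lam mu]
  obtain ⟨q, hq1, hqΛ, hq⟩ := hcalm ab hab_small (x, mu) ⟨hmem, hmem_ball⟩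
  calc ‖x - xbar‖ + infDist lam (Lambda f g K xbar)
    _ ≤ 2 * ‖(x, mu) - q‖ + ‖lam - mu‖ := by
      simpa only [dist_eq_norm, hq1] using
        dist_add_infDist_le_two_mul_dist_mk_add_dist hqΛ x lam mu
    _ ≤ 2 * (l * ((M + 1) * r)) + r := by gcongr; exact hq.trans (by gcongr)
    _ = (2 * (l * (M + 1)) + 1) * r := by ring

theorem KKTErrorBound.semiIsolatedCalm (hbound : KKTErrorBound f g K projK xbar lambar)
    (hP : IsMetricProjection K projK) (hK : Convex ℝ K)
    (hlam : (Lambda f g K xbar).Nonempty) : SemiIsolatedCalm f g K xbar lambar := by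
  obtain ⟨ε, hε, τ, hτ, hbound⟩ := hbound
  refine ⟨ε, hε, 1, one_pos, τ, hτ, ?_⟩
  rintro ab - ⟨x, lam⟩ ⟨hmem, hball⟩
  obtain ⟨mu, hmu, infDist_eq⟩ := (isClosed_Lambda f g K xbar).exists_infDist_eq_dist hlam lam
  refine ⟨(xbar, mu), rfl, hmu, ?_⟩
  calc ‖(x, lam) - (xbar, mu)‖
      ≤ ‖x - xbar‖ + ‖lam - mu‖ := max_le_add_of_nonneg (norm_nonneg _) (norm_nonneg _)
    _ = ‖x - xbar‖ + infDist lam (Lambda f g K xbar) := by rw [infDist_eq, dist_eq_norm]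
    _ ≤ τ * kktResidual f g projK x lam := hbound x lam hball
    _ ≤ τ * (‖ab.1‖ + ‖ab.2‖) := by gcongr; exact hP.kktResidual_le_of_mem_SKKT hK hmem

theorem semiIsolatedCalm_iff_errorBound_general (hP : IsMetricProjection K projK)
    (hK : Convex ℝ K) (_hf : ∀ᶠ x in 𝓝 xbar, DifferentiableAt ℝ f x)
    (_hg : ∀ᶠ x in 𝓝 xbar, DifferentiableAt ℝ g x)
    (hg_bdd : (𝓝 xbar).IsBoundedUnder (· ≤ ·) fun x => ‖fderiv ℝ g x‖)
    (hlam : lambar ∈ Lambda f g K xbar) :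
    SemiIsolatedCalm f g K xbar lambar ↔ KKTErrorBound f g K projK xbar lambar :=
  ⟨fun h => h.kktErrorBound hP hK hg_bdd hlam, fun h => h.semiIsolatedCalm hP hK ⟨lambar, hlam⟩⟩

end KKT

/-- **Proposition 2.1.** Semi-isolated calmness of `S_KKT` at the origin for `(x̄, λ̄)` is
equivalent to a local error bound in terms of the KKT residual. -/
theorem semiIsolatedCalm_iff_errorBound
    (f : X → ℝ) (g : X → H) (K : Set H)
    (hf : ContDiff ℝ 2 f) (hg : ContDiff ℝ 2 g)
    (hKne : K.Nonempty) (hKcl : IsClosed K) (hKconv : Convex ℝ K)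
    (projK : H → H)
    (hproj : ∀ y : H, projK y ∈ K ∧ ∀ z ∈ K, ‖y - projK y‖ ≤ ‖y - z‖)
    (xbar : X) (lambar : H)
    (hKKT : gradLx f g xbar lambar = 0 ∧ lambar ∈ normalCone K (g xbar)) :
    SemiIsolatedCalm f g K xbar lambar ↔
      ∃ ε > (0:ℝ), ∃ τ > (0:ℝ), ∀ x : X, ∀ lam : H,
        dist (x, lam) ((xbar, lambar) : X × H) ≤ ε →
          ‖x - xbar‖ + infDist lam (Lambda f g K xbar) ≤ τ * kktResidual f g projK x lam := by
  exact semiIsolatedCalm_iff_errorBound_general hproj hKconv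
    (.of_forall <| hf.differentiable two_ne_zero) (.of_forall <| hg.differentiable two_ne_zero)
    (hg.continuous_fderiv two_ne_zero).norm.continuousAt.isBoundedUnder_le hKKT
end
end

section
/- Let (x̄, λ̄) be a KKT point of (P). If the multiplier mapping M_x̄ is calm at the origin for λ̄ and the SOSC holds at (x̄, λ̄), then the solution mapping S_KKT is semi-isolated calm at the origin for (x̄, λ̄). -/
open Metric Set Filter Topology Asymptotics
open scoped RealInnerProductSpace

noncomputable section

variable {X H : Type*} [NormedAddCommGroup X] [InnerProductSpace ℝ X] [FiniteDimensional ℝ X]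
variable [NormedAddCommGroup H] [InnerProductSpace ℝ H] [FiniteDimensional ℝ H]

/-- The multiplier mapping `M_x̄(a, b)`. -/
def MultMap (f : X → ℝ) (g : X → H) (K : Set H) (xbar : X) (ab : X × H) : Set H :=
  {lam | ab.1 = gradLx f g xbar lam ∧ lam ∈ normalCone K (g xbar - ab.2)}

/-- Calmness of the multiplier mapping `M_x̄` at the origin for `λ̄`. -/
def MultMapCalm (f : X → ℝ) (g : X → H) (K : Set H) (xbar : X) (lambar : H) : Prop :=
  ∃ κ > (0:ℝ), ∃ ε > (0:ℝ), ∃ δ > (0:ℝ), ∀ ab : X × H, ‖ab‖ ≤ ε →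
    ∀ lam ∈ MultMap f g K xbar ab ∩ closedBall lambar δ,
      ∃ lam₀ ∈ Lambda f g K xbar, ‖lam - lam₀‖ ≤ κ * ‖ab‖

/-!
Calmness of the multiplier mapping provides, for every perturbed KKT pair `(x, λ)` near
`(x̄, λ̄)`, a multiplier `ν ∈ Λ(x̄)` with `λ - ν = O(‖x - x̄‖ + ‖(a, b)‖)`, so it remains to
show `x - x̄ = O(‖(a, b)‖)`. If this fails, then along some perturbed solutions
`(a, b) = o(‖x - x̄‖)`, and after division by `‖x - x̄‖` one obtains limits `d ≠ 0` of
`x - x̄` and `μ` of `λ - ν`. The direction `d` is critical, and the limit of the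
stationarity equation tested against `d` reads `⟨∇²L d, d⟩ = -⟨μ, Dg d⟩`.

To bound the right-hand side, write `K` near `g(x̄)` as the image of a cone `C` under a `C²`
map `e` with `De(0) = id`. If `p ∈ C` and `λ` is normal to `K` at `e p`, then the ray
through `p` stays in `C` and gives `⟨λ, De(p) p⟩ ≥ 0`, while `⟨ν, p⟩ ≤ 0`; hence
`⟨λ - ν, p⟩ ≥ -⟨λ, (De(p) - De(0)) p⟩`. Dividing by `‖x - x̄‖²` and passing to the limit
yields `⟨μ, h⟩ ≥ -⟨λ̄, D²e(0)(h, h)⟩` for `h = Dg d`. Since `e(t h) ∈ K`, the vector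
`D²e(0)(h, h)` belongs to `T²_K(g(x̄), h)`, which contradicts the SOSC.
-/

section Calculus

variable {ι E F G : Type*} [NormedAddCommGroup E] [NormedSpace ℝ E]
  [NormedAddCommGroup F] [NormedSpace ℝ F] [NormedAddCommGroup G] [NormedSpace ℝ G]
  {l : Filter ι}

lemma tendsto_smul_sub_of_hasFDerivAt {φ : E → F} {φ' : E →L[ℝ] F} {x₀ v : E}
    (hφ : HasFDerivAt φ φ' x₀) {x : ι → E} {c : ι → ℝ} (hx : Tendsto x l (𝓝 x₀))
    (hc : Tendsto (fun i => c i • (x i - x₀)) l (𝓝 v)) :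
    Tendsto (fun i => c i • (φ (x i) - φ x₀)) l (𝓝 (φ' v)) := by
  have hx_sub : Tendsto (fun i => x i - x₀) l (𝓝 0) := tendsto_sub_nhds_zero_iff.2 hx
  simpa using hφ.hasFDerivWithinAt.lim hx_sub (.of_forall fun _ => mem_univ _) hc

lemma hasFDerivAt_fderiv_of_contDiffAt_two {φ : E → F} {x : E} (hφ : ContDiffAt ℝ 2 φ x) :
    HasFDerivAt (fderiv ℝ φ) (fderiv ℝ (fderiv ℝ φ) x) x :=
  ((hφ.fderiv_right (m := 1) (by norm_num)).differentiableAt one_ne_zero).hasFDerivAt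

lemma eventually_differentiableAt_of_contDiffAt_two {φ : E → F} {x : E}
    (hφ : ContDiffAt ℝ 2 φ x) : ∀ᶠ z in 𝓝 x, DifferentiableAt ℝ φ z :=
  (hφ.eventually (by simp)).mono fun _ hz => hz.differentiableAt two_ne_zero

lemma tendsto_smul_fderiv_sub_apply {φ : E → F} {x₀ v w : E} (hφ : ContDiffAt ℝ 2 φ x₀)
    {x u : ι → E} {c : ι → ℝ} (hx : Tendsto x l (𝓝 x₀))
    (hc : Tendsto (fun i => c i • (x i - x₀)) l (𝓝 v)) (hu : Tendsto u l (𝓝 w)) :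
    Tendsto (fun i => c i • (fderiv ℝ φ (x i) (u i) - fderiv ℝ φ x₀ (u i))) l
      (𝓝 (fderiv ℝ (fderiv ℝ φ) x₀ v w)) :=
  (isBoundedBilinearMap_apply.continuous.tendsto _).comp
    ((tendsto_smul_sub_of_hasFDerivAt (hasFDerivAt_fderiv_of_contDiffAt_two hφ) hx hc).prodMk_nhds
      hu)

lemma hasDerivAt_ray (x h : E) (t : ℝ) : HasDerivAt (fun s : ℝ => x + s • h) h t := by
  simpa using ((hasDerivAt_id t).smul_const h).const_add x

lemma hasDerivAt_fderiv_along_ray {φ : E → F} {x : E} (hφ : ContDiffAt ℝ 2 φ x) (h : E) :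
    HasDerivAt (fun t : ℝ => fderiv ℝ φ (x + t • h) h) (fderiv ℝ (fderiv ℝ φ) x h h) 0 := by
  have hφ' : HasFDerivAt (fderiv ℝ φ) (fderiv ℝ (fderiv ℝ φ) x) (x + (0 : ℝ) • h) := by
    rw [zero_smul, add_zero]
    exact hasFDerivAt_fderiv_of_contDiffAt_two hφ
  exact (ContinuousLinearMap.apply ℝ F h).hasFDerivAt.comp_hasDerivAt (0 : ℝ)
    (hφ'.comp_hasDerivAt (0 : ℝ) (hasDerivAt_ray x h 0))

lemma isLittleO_taylor_two_along_ray {φ : E → F} {x : E} (hφ : ContDiffAt ℝ 2 φ x) (h : E) :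
    (fun t : ℝ => φ (x + t • h) -
        (φ x + t • fderiv ℝ φ x h + (t ^ 2 / 2) • fderiv ℝ (fderiv ℝ φ) x h h))
      =o[𝓝 0] fun t => t ^ 2 := by
  have hline : Tendsto (fun t : ℝ => x + t • h) (𝓝 0) (𝓝 x) :=
    Continuous.tendsto' (by fun_prop) _ _ (by simp)
  obtain ⟨r, hr, hdiff⟩ := Metric.eventually_nhds_iff_ball.1
    (hline.eventually (eventually_differentiableAt_of_contDiffAt_two hφ))
  let b := fderiv ℝ (fderiv ℝ φ) x h h
  let R : ℝ → F := fun t => φ (x + t • h) - t • fderiv ℝ φ x h - (t ^ 2 / 2) • b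
  let R' : ℝ → F := fun t => fderiv ℝ φ (x + t • h) h - fderiv ℝ φ x h - t • b
  have hR : ∀ t ∈ ball (0 : ℝ) r, HasDerivWithinAt R (R' t) (ball 0 r) t := by
    intro t ht
    have hlin : HasDerivAt (fun s : ℝ => s • fderiv ℝ φ x h) (fderiv ℝ φ x h) t := by
      simpa using (hasDerivAt_id t).smul_const (fderiv ℝ φ x h)
    have hquad : HasDerivAt (fun s : ℝ => s ^ 2 / 2) t t := by
      simpa using (hasDerivAt_pow 2 t).div_const 2
    exact ((((hdiff t ht).hasFDerivAt.comp_hasDerivAt t (hasDerivAt_ray x h t)).sub hlin).sub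
      (hquad.smul_const b)).hasDerivWithinAt
  have hR' : R' =o[𝓝 0] fun t : ℝ => t - 0 := by
    simpa only [zero_smul, add_zero, sub_zero] using
      (hasDerivAt_fderiv_along_ray hφ h).isLittleO
  have hR_sub := (convex_ball (0 : ℝ) r).isLittleO_pow_succ_real (n := 1) (mem_ball_self hr) hR
    (by simpa only [pow_one] using hR'.mono nhdsWithin_le_nhds)
  rw [nhdsWithin_eq_nhds.2 (ball_mem_nhds _ hr)] at hR_sub
  refine hR_sub.congr (fun t => ?_) (fun t => by simp)
  simp only [R, b, zero_smul, add_zero]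
  module

lemma exists_straightening {n : WithTop ℕ∞} {Θ : E → G} {y₀ : E} {R : G →L[ℝ] E} (hn : n ≠ 0)
    (hΘ : ContDiffAt ℝ n Θ y₀) (hΘ₀ : Θ y₀ = 0) (hR : ∀ z, fderiv ℝ Θ y₀ (R z) = z) :
    ∃ Φ : E → E, ContDiffAt ℝ n Φ y₀ ∧ Φ y₀ = 0 ∧
      HasFDerivAt Φ (ContinuousLinearMap.id ℝ E) y₀ ∧ ∀ y, fderiv ℝ Θ y₀ (Φ y) = Θ y := by
  set A := fderiv ℝ Θ y₀
  refine ⟨fun y => (y - y₀) + R (Θ y - A (y - y₀)), by fun_prop, by simp [hΘ₀], ?_,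
    fun y => by rw [map_add, hR]; abel⟩
  have hid : HasFDerivAt (fun y => y - y₀) (ContinuousLinearMap.id ℝ E) y₀ :=
    (hasFDerivAt_id y₀).sub_const y₀
  have hΘ' : HasFDerivAt Θ A y₀ := (hΘ.differentiableAt hn).hasFDerivAt
  have hΦ := hid.add (R.hasFDerivAt.comp y₀ (hΘ'.sub (A.hasFDerivAt.comp y₀ hid)))
  rw [ContinuousLinearMap.comp_id, sub_self, ContinuousLinearMap.comp_zero, add_zero] at hΦ
  exact hΦ

end Calculus

section Asymptotics

variable {ι E F : Type*} [NormedAddCommGroup E] [NormedAddCommGroup F]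

lemma isBigO_one_inv_norm_smul [NormedSpace ℝ F] {l : Filter ι} {u : ι → E} {v : ι → F}
    (h : v =O[l] u) : (fun i => ‖u i‖⁻¹ • v i) =O[l] fun _ => (1 : ℝ) := by
  refine ((isBigO_refl (fun i => ‖u i‖⁻¹) l).smul h.norm_right).trans (.of_bound' ?_)
  exact .of_forall fun i => by simpa using inv_mul_le_one

lemma exists_neBot_isLittleO_of_not_isBigO {l : Filter ι} {u : ι → E} {v : ι → F}
    (h : ¬ u =O[l] v) :
    ∃ l' ≤ l, l'.NeBot ∧ v =o[l'] u ∧ ∀ᶠ i in l', u i ≠ 0 := by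
  let S : ℕ → Set ι := fun k => {i | k * ‖v i‖ < ‖u i‖}
  have hS_anti : Antitone S := fun j k hjk i (hi : k * ‖v i‖ < ‖u i‖) =>
    lt_of_le_of_lt (by gcongr) hi
  have hS_freq : ∀ k, ∃ᶠ i in l, i ∈ S k := fun k hk =>
    h (.of_bound k (hk.mono fun i hi => not_lt.1 hi))
  have hS_basis : (l ⊓ ⨅ k, 𝓟 (S k)) = ⨅ k, l ⊓ 𝓟 (S k) := inf_iInf
  have hS_mem : ∀ k, S k ∈ l ⊓ ⨅ k, 𝓟 (S k) := fun k =>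
    mem_inf_of_right (mem_iInf_of_mem k (mem_principal_self _))
  refine ⟨l ⊓ ⨅ k, 𝓟 (S k), inf_le_left, ?_, ?_, ?_⟩
  · rw [hS_basis]
    refine iInf_neBot_of_directed' ?_ fun k => frequently_mem_iff_neBot.1 (hS_freq k)
    exact directed_of_isDirected_le fun j k hjk =>
      inf_le_inf_left l (principal_mono.2 (hS_anti hjk))
  · refine isLittleO_iff_nat_mul_le.2 fun k => ?_
    filter_upwards [hS_mem k] with i hi using hi.le
  · filter_upwards [hS_mem 0] with i hi
    exact norm_pos_iff.1 (by simpa [S] using hi)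

lemma exists_tendsto_ultrafilter_of_isBigO_one [ProperSpace E] {l : Ultrafilter ι} {u : ι → E}
    (h : u =O[(l : Filter ι)] fun _ => (1 : ℝ)) : ∃ a, Tendsto u l (𝓝 a) := by
  obtain ⟨c, hc⟩ := h.bound
  have hmem : ∀ᶠ i in (l : Filter ι), u i ∈ closedBall (0 : E) c := by
    filter_upwards [hc] with i hi
    simpa using hi
  obtain ⟨a, -, ha⟩ := (isCompact_closedBall (0 : E) c).ultrafilter_le_nhds (l.map u)
    (le_principal_iff.2 hmem)
  exact ⟨a, ha⟩

end Asymptotics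

section NormalCone

variable {ι E F : Type*} [NormedAddCommGroup E] [InnerProductSpace ℝ E]
  [NormedAddCommGroup F] [NormedSpace ℝ F] {K : Set E} {y y₀ h lam : E} {l : Filter ι}

lemma inner_apply_nonpos_of_mem_normalCone {φ : F → E} {φ' : F →L[ℝ] E} {p v : F}
    (hφ : HasFDerivAt φ φ' p) (hlam : lam ∈ normalCone K (φ p))
    (hv : v ∈ posTangentConeAt (φ ⁻¹' K) p) : ⟪lam, φ' v⟫ ≤ 0 := by
  have hmax : IsLocalMaxOn (fun z => ⟪lam, φ z⟫) (φ ⁻¹' K) p :=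
    IsMaxOn.localize fun z hz => sub_nonpos.1 (by
      simpa only [inner_sub_right] using hlam.2 (φ z) hz)
  exact hmax.hasFDerivWithinAt_nonpos
    ((innerSL ℝ lam).hasFDerivAt.comp p hφ).hasFDerivWithinAt hv

lemma inner_nonpos_of_mem_posTangentConeAt (hlam : lam ∈ normalCone K y)
    (hh : h ∈ posTangentConeAt K y) : ⟪lam, h⟫ ≤ 0 :=
  inner_apply_nonpos_of_mem_normalCone (hasFDerivAt_id y) hlam hh

lemma inner_sub_le_norm_mul_infDist (hlam : lam ∈ normalCone K y) (z : E) :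
    ⟪lam, z - y⟫ ≤ ‖lam‖ * infDist z K := by
  rw [infDist_eq_iInf, Real.mul_iInf_of_nonneg (norm_nonneg lam)]
  have : Nonempty K := ⟨⟨y, hlam.1⟩⟩
  refine le_ciInf fun ⟨k, hk⟩ => ?_
  calc ⟪lam, z - y⟫ = ⟪lam, z - k⟫ + ⟪lam, k - y⟫ := by
        rw [← inner_add_right, sub_add_sub_cancel]
    _ ≤ ‖lam‖ * ‖z - k‖ + 0 := add_le_add (real_inner_le_norm _ _) (hlam.2 k hk)
    _ = ‖lam‖ * dist z k := by rw [add_zero, dist_eq_norm]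

lemma inner_nonpos_of_mem_secondTangentSet {w : E} (hlam : lam ∈ normalCone K y)
    (hh : ⟪lam, h⟫ = 0) (hw : w ∈ secondTangentSet K y h) : ⟪lam, w⟫ ≤ 0 := by
  have hlim : Tendsto
      (fun t : ℝ => 2 * ‖lam‖ * (infDist (y + t • h + (t ^ 2 / 2) • w) K / t ^ 2))
      (𝓝[>] 0) (𝓝 0) := by
    simpa only [mul_zero] using (IsLittleO.tendsto_div_nhds_zero hw).const_mul (2 * ‖lam‖)
  refine ge_of_tendsto hlim ?_
  filter_upwards [self_mem_nhdsWithin] with t (ht : 0 < t)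
  have hdist : t ^ 2 / 2 * ⟪lam, w⟫ ≤ ‖lam‖ * infDist (y + t • h + (t ^ 2 / 2) • w) K := by
    calc t ^ 2 / 2 * ⟪lam, w⟫ = ⟪lam, y + t • h + (t ^ 2 / 2) • w - y⟫ := by
          rw [add_assoc, add_sub_cancel_left, inner_add_right, inner_smul_right,
            inner_smul_right, hh, mul_zero, zero_add]
      _ ≤ _ := inner_sub_le_norm_mul_infDist hlam _
  rw [mul_div_assoc', le_div_iff₀ (by positivity)]
  linarith

variable [l.NeBot] {t : ι → ℝ} {z : ι → E}

lemma mem_posTangentConeAt_of_tendsto (ht : ∀ᶠ i in l, 0 < t i) (hz : Tendsto z l (𝓝 y₀))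
    (hzK : ∀ᶠ i in l, z i ∈ K) (hzh : Tendsto (fun i => (t i)⁻¹ • (z i - y₀)) l (𝓝 h)) :
    h ∈ posTangentConeAt K y₀ := by
  refine mem_tangentConeAt_of_seq l (fun i => (t i)⁻¹.toNNReal) (fun i => z i - y₀)
    (tendsto_sub_nhds_zero_iff.2 hz) (by simpa using hzK) (hzh.congr' ?_)
  filter_upwards [ht] with i hi
  rw [NNReal.smul_def, Real.coe_toNNReal _ (inv_nonneg.2 hi.le)]

lemma inner_eq_zero_of_tendsto_normalCone {nu : ι → E} (ht : ∀ᶠ i in l, 0 < t i)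
    (hz : Tendsto z l (𝓝 y₀)) (hzh : Tendsto (fun i => (t i)⁻¹ • (z i - y₀)) l (𝓝 h))
    (hnu : Tendsto nu l (𝓝 lam)) (hnuN : ∀ᶠ i in l, nu i ∈ normalCone K (z i))
    (hlam : lam ∈ normalCone K y₀) : ⟪lam, h⟫ = 0 := by
  refine le_antisymm (inner_nonpos_of_mem_posTangentConeAt hlam
    (mem_posTangentConeAt_of_tendsto ht hz (hnuN.mono fun _ hi => hi.1) hzh)) ?_
  refine ge_of_tendsto (hnu.inner (𝕜 := ℝ) hzh) ?_
  filter_upwards [ht, hnuN] with i hi hnui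
  have hback : ⟪nu i, y₀ - z i⟫ ≤ 0 := hnui.2 y₀ hlam.1
  rw [inner_smul_right, ← neg_sub, inner_neg_right]
  exact mul_nonneg (inv_nonneg.2 hi.le) (neg_nonneg.2 hback)

end NormalCone

section ConicParametrization

/-- A conic parametrization of `K` at `y₀`: a `C²` local diffeomorphism, tangent to the
translation `z ↦ y₀ + z` at the origin, which locally carries the closed cone `C` onto `K`. -/
structure IsConicParametrization {E : Type*} [NormedAddCommGroup E] [NormedSpace ℝ E]
    (e : OpenPartialHomeomorph E E) (C K : Set E) (y₀ : E) : Prop where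
  zero_mem_source : 0 ∈ e.source
  apply_zero : e 0 = y₀
  contDiffAt : ContDiffAt ℝ 2 e 0
  hasFDerivAt : HasFDerivAt e (ContinuousLinearMap.id ℝ E) 0
  isImage : e.IsImage C K
  isClosed : IsClosed C
  smul_mem : ∀ r : ℝ, 0 ≤ r → ∀ z ∈ C, r • z ∈ C

/-- `K` coincides near `y₀` with a closed cone, up to a `C²` change of coordinates of the ambient
space. For a `C²`-cone reducible `K` this cone is the preimage of the reduced one under the
derivative of the reduction, so it contains the kernel of that derivative and need not be
pointed. -/
def HasConicParametrizationAt {E : Type*} [NormedAddCommGroup E] [NormedSpace ℝ E]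
    (K : Set E) (y₀ : E) : Prop :=
  ∃ (e : OpenPartialHomeomorph E E) (C : Set E), IsConicParametrization e C K y₀

variable {E : Type*} [NormedAddCommGroup E] [InnerProductSpace ℝ E] {K : Set E} {y₀ : E}

lemma C2ConeReducible.hasConicParametrizationAt [CompleteSpace E] (hK : C2ConeReducible K)
    (hy₀ : y₀ ∈ K) : HasConicParametrizationAt K y₀ := by
  obtain ⟨n, C, N, Θ, hC_closed, -, hC_smul, -, hN, hy₀N, hΘ, hΘ₀, hΘ_surj, hKN⟩ := hK y₀ hy₀
  have hΘ_at : ContDiffAt ℝ 2 Θ y₀ := hΘ.contDiffAt (hN.mem_nhds hy₀N)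
  obtain ⟨R, hR⟩ := (fderiv ℝ Θ y₀).exists_rightInverse_of_surjective
    (LinearMap.range_eq_top.2 hΘ_surj)
  obtain ⟨Φ, hΦ, hΦ₀, hΦ', hΘΦ⟩ := exists_straightening two_ne_zero hΘ_at hΘ₀
    (fun z => congrArg (fun T => T z) hR)
  have hΦ'_equiv : HasFDerivAt Φ ((ContinuousLinearEquiv.refl ℝ E : E ≃L[ℝ] E) : E →L[ℝ] E) y₀ :=
    hΦ'
  let chart := (hΦ.toOpenPartialHomeomorph Φ hΦ'_equiv two_ne_zero).restrOpen N hN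
  have hchart : ⇑chart = Φ := rfl
  have hy₀_source : y₀ ∈ chart.source :=
    ⟨hΦ.mem_toOpenPartialHomeomorph_source hΦ'_equiv two_ne_zero, hy₀N⟩
  have hsymm₀ : chart.symm 0 = y₀ := by
    rw [← hΦ₀, ← hchart, chart.left_inv hy₀_source]
  have h0_target : 0 ∈ chart.target := by
    rw [← hΦ₀, ← hchart]
    exact chart.map_source hy₀_source
  refine ⟨chart.symm, fderiv ℝ Θ y₀ ⁻¹' C, h0_target, hsymm₀, ?_, ?_, ?_,
    hC_closed.preimage (fderiv ℝ Θ y₀).continuous, fun r hr z hz => ?_⟩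
  · exact chart.contDiffAt_symm h0_target (by rwa [hsymm₀]) (by rwa [hsymm₀])
  · exact chart.hasFDerivAt_symm h0_target (f' := ContinuousLinearEquiv.refl ℝ E) (by rwa [hsymm₀])
  · refine OpenPartialHomeomorph.IsImage.symm fun y hy => ?_
    have hyK : y ∈ K ∩ N ↔ y ∈ Θ ⁻¹' C ∩ N := by rw [hKN]
    simpa only [hchart, mem_preimage, hΘΦ, mem_inter_iff, hy.2, and_true] using hyK.symm
  · rw [mem_preimage, map_smul]
    exact hC_smul r hr _ hz

namespace IsConicParametrization

variable {e : OpenPartialHomeomorph E E} {C : Set E} {h p lam lam' : E}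

lemma mem_target (he : IsConicParametrization e C K y₀) : y₀ ∈ e.target :=
  he.apply_zero ▸ e.map_source he.zero_mem_source

lemma eventually_smul_mem (he : IsConicParametrization e C K y₀) (hh : h ∈ C) :
    ∀ᶠ t : ℝ in 𝓝[>] 0, e (t • h) ∈ K := by
  have hray : Tendsto (fun t : ℝ => t • h) (𝓝[>] 0) (𝓝 0) :=
    (Continuous.tendsto' (by fun_prop) _ _ (zero_smul ℝ h) :
      Tendsto (fun t : ℝ => t • h) (𝓝 0) (𝓝 0)).mono_left nhdsWithin_le_nhds
  filter_upwards [hray.eventually (e.open_source.mem_nhds he.zero_mem_source),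
    self_mem_nhdsWithin] with t ht_source (ht : 0 < t)
  exact (he.isImage ht_source).2 (he.smul_mem t ht.le h hh)

lemma mem_secondTangentSet (he : IsConicParametrization e C K y₀) (hh : h ∈ C) :
    fderiv ℝ (fderiv ℝ e) 0 h h ∈ secondTangentSet K y₀ h := by
  have htaylor := (isLittleO_taylor_two_along_ray he.contDiffAt h).mono
    (nhdsWithin_le_nhds (s := Ioi 0))
  refine (IsBigO.of_bound' ?_).trans_isLittleO htaylor
  filter_upwards [he.eventually_smul_mem hh] with t ht
  rw [Real.norm_of_nonneg infDist_nonneg, zero_add, he.apply_zero, he.hasFDerivAt.fderiv,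
    ← dist_eq_norm, dist_comm]
  exact infDist_le_dist_of_mem ht

lemma inner_nonpos (he : IsConicParametrization e C K y₀) (hlam : lam ∈ normalCone K y₀)
    (hh : h ∈ C) : ⟪lam, h⟫ ≤ 0 := by
  have hh_tangent : h ∈ posTangentConeAt (e ⁻¹' K) 0 :=
    mem_posTangentConeAt_of_frequently_mem
      ((he.eventually_smul_mem hh).mono fun t ht => by simpa using ht).frequently
  exact inner_apply_nonpos_of_mem_normalCone he.hasFDerivAt (by rwa [he.apply_zero]) hh_tangent

lemma inner_fderiv_nonneg (he : IsConicParametrization e C K y₀) (hp : p ∈ e.source)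
    (hdiff : DifferentiableAt ℝ e p) (hlam : lam ∈ normalCone K (e p)) :
    0 ≤ ⟪lam, fderiv ℝ e p p⟫ := by
  have hpC : p ∈ C := (he.isImage hp).1 hlam.1
  have hray : Tendsto (fun t : ℝ => p + t • -p) (𝓝[>] 0) (𝓝 p) :=
    (Continuous.tendsto' (by fun_prop) _ _ (by simp)).mono_left nhdsWithin_le_nhds
  have hp_tangent : -p ∈ posTangentConeAt (e ⁻¹' K) p := by
    refine mem_posTangentConeAt_of_frequently_mem (Eventually.frequently ?_)
    filter_upwards [hray.eventually (e.open_source.mem_nhds hp),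
      Ioo_mem_nhdsGT one_pos] with t ht_source ht
    have hmem : p + t • -p ∈ C := by
      have hsmul := he.smul_mem (1 - t) (sub_nonneg.2 ht.2.le) p hpC
      rwa [sub_smul, one_smul, sub_eq_add_neg, ← smul_neg] at hsmul
    exact (he.isImage ht_source).2 hmem
  simpa only [map_neg, inner_neg_right, Left.neg_nonpos_iff] using
    inner_apply_nonpos_of_mem_normalCone hdiff.hasFDerivAt hlam hp_tangent

lemma neg_inner_le_inner_sub (he : IsConicParametrization e C K y₀) (hp : p ∈ e.source)
    (hdiff : DifferentiableAt ℝ e p) (hlam : lam ∈ normalCone K (e p))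
    (hlam' : lam' ∈ normalCone K y₀) :
    -⟪lam, (fderiv ℝ e p - fderiv ℝ e 0) p⟫ ≤ ⟪lam - lam', p⟫ := by
  have hnonneg := he.inner_fderiv_nonneg hp hdiff hlam
  have hnonpos := he.inner_nonpos hlam' ((he.isImage hp).1 hlam.1)
  rw [he.hasFDerivAt.fderiv, sub_apply, ContinuousLinearMap.id_apply, inner_sub_right,
    inner_sub_left]
  linarith

variable {ι : Type*} {l : Filter ι} {t : ι → ℝ} {z : ι → E}

lemma tendsto_symm (he : IsConicParametrization e C K y₀) (hz : Tendsto z l (𝓝 y₀)) :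
    Tendsto (fun i => e.symm (z i)) l (𝓝 0) := by
  have hsymm := e.tendsto_symm he.zero_mem_source
  rw [he.apply_zero] at hsymm
  exact hsymm.comp hz

lemma tendsto_smul_symm (he : IsConicParametrization e C K y₀) (hz : Tendsto z l (𝓝 y₀))
    (hzh : Tendsto (fun i => (t i)⁻¹ • (z i - y₀)) l (𝓝 h)) :
    Tendsto (fun i => (t i)⁻¹ • e.symm (z i)) l (𝓝 h) := by
  have hsymm₀ : e.symm y₀ = 0 := by rw [← he.apply_zero, e.left_inv he.zero_mem_source]
  have hsymm' : HasFDerivAt e.symm (ContinuousLinearMap.id ℝ E) y₀ :=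
    e.hasFDerivAt_symm he.mem_target (f' := ContinuousLinearEquiv.refl ℝ E)
      (by rw [hsymm₀]; exact he.hasFDerivAt)
  simpa only [hsymm₀, sub_zero, ContinuousLinearMap.id_apply] using
    tendsto_smul_sub_of_hasFDerivAt hsymm' hz hzh

lemma mem_cone_of_tendsto [l.NeBot] (he : IsConicParametrization e C K y₀)
    (ht : ∀ᶠ i in l, 0 < t i) (hz : Tendsto z l (𝓝 y₀)) (hzK : ∀ᶠ i in l, z i ∈ K)
    (hzh : Tendsto (fun i => (t i)⁻¹ • (z i - y₀)) l (𝓝 h)) : h ∈ C := by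
  refine he.isClosed.mem_of_tendsto (he.tendsto_smul_symm hz hzh) ?_
  filter_upwards [ht, hzK, hz.eventually (e.open_target.mem_nhds he.mem_target)] with i hti hzi hi
  exact he.smul_mem _ (inv_nonneg.2 hti.le) _ ((he.isImage.symm_apply_mem_iff hi).2 hzi)

end IsConicParametrization

lemma HasConicParametrizationAt.exists_secondTangent_neg_inner_le {ι : Type*} {l : Filter ι}
    [l.NeBot] {t : ι → ℝ} {z nu nu' : ι → E} {h lam mu : E}
    (hK : HasConicParametrizationAt K y₀) (ht : ∀ᶠ i in l, 0 < t i) (hz : Tendsto z l (𝓝 y₀))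
    (hzh : Tendsto (fun i => (t i)⁻¹ • (z i - y₀)) l (𝓝 h)) (hnu : Tendsto nu l (𝓝 lam))
    (hnuN : ∀ᶠ i in l, nu i ∈ normalCone K (z i)) (hnu'N : ∀ᶠ i in l, nu' i ∈ normalCone K y₀)
    (hmu : Tendsto (fun i => (t i)⁻¹ • (nu i - nu' i)) l (𝓝 mu)) :
    ∃ w ∈ secondTangentSet K y₀ h, -⟪lam, w⟫ ≤ ⟪mu, h⟫ := by
  obtain ⟨e, C, he⟩ := hK
  refine ⟨_, he.mem_secondTangentSet
    (he.mem_cone_of_tendsto ht hz (hnuN.mono fun _ hi => hi.1) hzh), ?_⟩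
  have hp := he.tendsto_symm hz
  have hph := he.tendsto_smul_symm hz hzh
  have hquad := tendsto_smul_fderiv_sub_apply he.contDiffAt hp
    (by simpa only [sub_zero] using hph) hph
  refine le_of_tendsto_of_tendsto (hnu.inner (𝕜 := ℝ) hquad).neg
    (hmu.inner (𝕜 := ℝ) hph) ?_
  filter_upwards [hnuN, hnu'N, hz.eventually (e.open_target.mem_nhds he.mem_target),
    hp.eventually (eventually_differentiableAt_of_contDiffAt_two he.contDiffAt)]
    with i hnui hnu'i hi hdiff
  have hle := he.neg_inner_le_inner_sub (e.map_target hi) hdiff (by rwa [e.right_inv hi]) hnu'i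
  have hscaled := mul_le_mul_of_nonneg_left hle (mul_self_nonneg (t i)⁻¹)
  simp only [map_smul, ← smul_sub, ← sub_apply, real_inner_smul_left, inner_smul_right]
  linarith

end ConicParametrization

section SOSC

variable {E F : Type*} [NormedAddCommGroup E] [InnerProductSpace ℝ E]
  [NormedAddCommGroup F] [InnerProductSpace ℝ F]
  {f : E → ℝ} {g : E → F} {K : Set F} {xbar : E} {lambar : F}

/-- The second-order sufficient condition with a one-sided tangent cone and without a supremum:
`tangentConeAt ℝ` is closed under negation, whereas `posTangentConeAt` is the Bouligand cone, and
the support function is replaced by its individual values `⟪lambar, w⟫`, so that no junk value of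
`sSup` enters. -/
def PointwiseSOSC (f : E → ℝ) (g : E → F) (K : Set F) (xbar : E) (lambar : F) : Prop :=
  ∀ d ≠ 0, fderiv ℝ g xbar d ∈ posTangentConeAt K (g xbar) → ⟪lambar, fderiv ℝ g xbar d⟫ = 0 →
    ∀ w ∈ secondTangentSet K (g xbar) (fderiv ℝ g xbar d),
      ⟪lambar, w⟫ < iteratedFDeriv ℝ 2 (fun x => f x + ⟪lambar, g x⟫) xbar ![d, d]

lemma SOSC.pointwiseSOSC (hSOSC : SOSC f g K xbar lambar)
    (hlambar : lambar ∈ normalCone K (g xbar)) : PointwiseSOSC f g K xbar lambar := by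
  intro d hd htangent horth w hw
  have hcritical : d ∈ criticalCone g K xbar lambar :=
    ⟨tangentConeAt_mono_field htangent, by rwa [real_inner_comm]⟩
  have hbdd : BddAbove ((fun z => ⟪lambar, z⟫) ''
      secondTangentSet K (g xbar) (fderiv ℝ g xbar d)) :=
    ⟨0, forall_mem_image.2 fun _ => inner_nonpos_of_mem_secondTangentSet hlambar horth⟩
  exact (le_csSup hbdd (mem_image_of_mem _ hw)).trans_lt (sub_pos.1 (hSOSC d hcritical hd))

end SOSC

section Lagrangian

variable {f : X → ℝ} {g : X → H} {K : Set H} {xbar : X} {lambar : H}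

lemma inner_gradLx (f : X → ℝ) (g : X → H) (x : X) (lam : H) (v : X) :
    ⟪gradLx f g x lam, v⟫ = fderiv ℝ f x v + ⟪lam, fderiv ℝ g x v⟫ := by
  rw [gradLx, inner_add_left, gradient, InnerProductSpace.toDual_symm_apply,
    ContinuousLinearMap.adjoint_inner_left]

lemma gradLx_sub_isBigO (hf : ContDiffAt ℝ 2 f xbar) (hg : ContDiffAt ℝ 2 g xbar) :
    (fun p : X × H => gradLx f g p.1 p.2 - gradLx f g xbar p.2) =O[𝓝 (xbar, lambar)]
      fun p => p.1 - xbar := by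
  have hfst : Tendsto Prod.fst (𝓝 (xbar, lambar)) (𝓝 xbar) := continuous_fst.tendsto _
  have hf' := (hasFDerivAt_fderiv_of_contDiffAt_two hf).isBigO_sub.comp_tendsto hfst
  have hg' := (hasFDerivAt_fderiv_of_contDiffAt_two hg).isBigO_sub.comp_tendsto hfst
  have hlam : (fun p : X × H => p.2) =O[𝓝 (xbar, lambar)] fun _ => (1 : ℝ) :=
    (continuous_snd.tendsto _).isBigO_one ℝ
  have hgradient : (fun p : X × H => gradient f p.1 - gradient f xbar) =O[𝓝 (xbar, lambar)]
      fun p => p.1 - xbar := by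
    refine .of_norm_left (hf'.norm_left.congr_left fun p => ?_)
    rw [gradient, gradient, ← map_sub, LinearIsometryEquiv.norm_map]
    rfl
  have hadjoint : (fun p : X × H => (fderiv ℝ g p.1 - fderiv ℝ g xbar).adjoint p.2)
      =O[𝓝 (xbar, lambar)] fun p => p.1 - xbar := by
    have hbound := isBoundedBilinearMap_apply.isBigO_comp (l := 𝓝 (xbar, lambar))
      (g := fun p : X × H => (fderiv ℝ g p.1 - fderiv ℝ g xbar).adjoint) (h := Prod.snd)
    simp only [LinearIsometryEquiv.norm_map] at hbound
    simpa using hbound.trans (hg'.norm_norm.mul hlam.norm_left)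
  refine (hgradient.add hadjoint).congr_left fun p => ?_
  simp only [gradLx, map_sub, sub_apply]
  abel

lemma fderiv_lagrangian_apply {x : X} (hf : DifferentiableAt ℝ f x) (hg : DifferentiableAt ℝ g x)
    (lam : H) (v : X) :
    fderiv ℝ (fun z => f z + ⟪lam, g z⟫) x v = ⟪gradLx f g x lam, v⟫ := by
  have hL := hf.hasFDerivAt.add ((innerSL ℝ lam).hasFDerivAt.comp x hg.hasFDerivAt)
  rw [inner_gradLx]
  exact congrArg (fun T => T v) hL.fderiv

lemma tendsto_smul_inner_gradLx_sub {ι : Type*} {l : Filter ι} {x : ι → X} {c : ι → ℝ} {d : X}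
    (hf : ContDiffAt ℝ 2 f xbar) (hg : ContDiffAt ℝ 2 g xbar) (lam : H)
    (hx : Tendsto x l (𝓝 xbar)) (hd : Tendsto (fun i => c i • (x i - xbar)) l (𝓝 d)) :
    Tendsto (fun i => c i • ⟪gradLx f g (x i) lam - gradLx f g xbar lam, d⟫) l
      (𝓝 (iteratedFDeriv ℝ 2 (fun x => f x + ⟪lam, g x⟫) xbar ![d, d])) := by
  have hL : ContDiffAt ℝ 2 (fun x => f x + ⟪lam, g x⟫) xbar :=
    hf.add (contDiffAt_const.inner ℝ hg)
  rw [iteratedFDeriv_two_apply]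
  refine (tendsto_smul_fderiv_sub_apply hL hx hd tendsto_const_nhds).congr' ?_
  filter_upwards [hx.eventually (eventually_differentiableAt_of_contDiffAt_two hf),
    hx.eventually (eventually_differentiableAt_of_contDiffAt_two hg)] with i hfi hgi
  rw [inner_sub_left, ← fderiv_lagrangian_apply hfi hgi,
    ← fderiv_lagrangian_apply (hf.differentiableAt two_ne_zero) (hg.differentiableAt two_ne_zero)]
  rfl

lemma inner_gradLx_sub_of_gradLx_eq_zero {nu : H} (x : X) (lam : H) (d : X)
    (hlambar : gradLx f g xbar lambar = 0) (hnu : gradLx f g xbar nu = 0) :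
    ⟪gradLx f g x lambar - gradLx f g xbar lambar, d⟫ =
      ⟪gradLx f g x lam, d⟫ - ⟪lam - nu, fderiv ℝ g x d⟫
        - ⟪nu - lambar, fderiv ℝ g x d - fderiv ℝ g xbar d⟫ := by
  have hlambar_d : ⟪gradLx f g xbar lambar, d⟫ = 0 := by rw [hlambar, inner_zero_left]
  have hnu_d : ⟪gradLx f g xbar nu, d⟫ = 0 := by rw [hnu, inner_zero_left]
  simp only [inner_gradLx, inner_sub_left, inner_sub_right] at hlambar_d hnu_d ⊢
  linarith

end Lagrangian

section KKT

variable {f : X → ℝ} {g : X → H} {K : Set H} {xbar : X} {lambar : H}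

/-- The filter of pairs `((a, b), (x, lam))` on the graph of `S_KKT` that converge to
`((0, 0), (xbar, lambar))`. Calmness properties of `S_KKT` at the origin are `O`-estimates
along it. -/
def kktFilter (f : X → ℝ) (g : X → H) (K : Set H) (xbar : X) (lambar : H) :
    Filter ((X × H) × X × H) :=
  𝓝 (0, xbar, lambar) ⊓ 𝓟 {q | q.2 ∈ SKKT f g K q.1}

lemma kktFilter_le_nhds : kktFilter f g K xbar lambar ≤ 𝓝 (0, xbar, lambar) :=
  inf_le_left

lemma eventually_kktFilter_mem_SKKT : ∀ᶠ q in kktFilter f g K xbar lambar, q.2 ∈ SKKT f g K q.1 :=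
  mem_inf_of_right (mem_principal_self _)

lemma tendsto_perturbation_kktFilter :
    Tendsto (fun q => q.1) (kktFilter f g K xbar lambar) (𝓝 0) :=
  (continuous_fst.tendsto _).mono_left kktFilter_le_nhds

lemma tendsto_primalDual_kktFilter :
    Tendsto (fun q => q.2) (kktFilter f g K xbar lambar) (𝓝 (xbar, lambar)) :=
  (continuous_snd.tendsto _).mono_left kktFilter_le_nhds

lemma tendsto_primal_kktFilter :
    Tendsto (fun q => q.2.1) (kktFilter f g K xbar lambar) (𝓝 xbar) :=
  (continuous_fst.tendsto _).comp tendsto_primalDual_kktFilter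

lemma tendsto_dual_kktFilter :
    Tendsto (fun q => q.2.2) (kktFilter f g K xbar lambar) (𝓝 lambar) :=
  (continuous_snd.tendsto _).comp tendsto_primalDual_kktFilter

lemma SemiIsolatedCalm.of_isBigO {mult : (X × H) × X × H → H}
    (hmult : ∀ᶠ q in kktFilter f g K xbar lambar, mult q ∈ Lambda f g K xbar)
    (hO : (fun q => q.2 - (xbar, mult q)) =O[kktFilter f g K xbar lambar] fun q => q.1) :
    SemiIsolatedCalm f g K xbar lambar := by
  obtain ⟨c, hc, hbound⟩ := hO.exists_pos
  obtain ⟨ε, hε, hball⟩ := (nhds_basis_closedBall.inf_principal _).eventually_iff.1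
    (hmult.and hbound.bound)
  refine ⟨ε, hε, ε, hε, c, hc, fun ab hab p hp => ?_⟩
  have hmem : (ab, p) ∈ closedBall (0, xbar, lambar) ε ∩ {q | q.2 ∈ SKKT f g K q.1} := by
    rw [← closedBall_prod_same]
    exact ⟨⟨mem_closedBall_zero_iff.2 hab, hp.2⟩, hp.1⟩
  obtain ⟨hmem_Lambda, hle⟩ := hball hmem
  have hnorm : ‖ab‖ ≤ ‖ab.1‖ + ‖ab.2‖ :=
    max_le_add_of_nonneg (norm_nonneg _) (norm_nonneg _)
  exact ⟨(xbar, mult (ab, p)), rfl, hmem_Lambda, hle.trans (by gcongr)⟩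

/-- The perturbation `(a, b)` for which the dual part of `q` belongs to `MultMap f g K xbar (a, b)`
when `q` lies on the graph of `S_KKT`. -/
def multiplierPerturbation (f : X → ℝ) (g : X → H) (xbar : X) (q : (X × H) × X × H) : X × H :=
  (gradLx f g xbar q.2.2, g xbar - (g q.2.1 + q.1.2))

lemma mem_MultMap_multiplierPerturbation {q : (X × H) × X × H} (hq : q.2 ∈ SKKT f g K q.1) :
    q.2.2 ∈ MultMap f g K xbar (multiplierPerturbation f g xbar q) :=
  ⟨rfl, by simpa only [multiplierPerturbation, sub_sub_cancel] using hq.2⟩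

lemma multiplierPerturbation_isBigO (hf : ContDiffAt ℝ 2 f xbar) (hg : ContDiffAt ℝ 2 g xbar) :
    multiplierPerturbation f g xbar =O[kktFilter f g K xbar lambar]
      fun q => (q.2.1 - xbar, q.1) := by
  have hprimal : (fun q : (X × H) × X × H => q.2.1 - xbar) =O[kktFilter f g K xbar lambar]
      fun q => (q.2.1 - xbar, q.1) := isBigO_fst_prod
  have hpert : (fun q : (X × H) × X × H => q.1) =O[kktFilter f g K xbar lambar]
      fun q => (q.2.1 - xbar, q.1) := isBigO_snd_prod
  have hgrad := ((gradLx_sub_isBigO hf hg).comp_tendsto tendsto_primalDual_kktFilter).trans hprimal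
  have hvalue := ((hg.differentiableAt two_ne_zero).isBigO_sub.comp_tendsto
    (tendsto_primal_kktFilter (f := f) (K := K) (lambar := lambar))).trans hprimal
  refine IsBigO.prod_left ?_ ?_
  · refine ((isBigO_fst_prod'.trans hpert).sub hgrad).congr' ?_ .rfl
    filter_upwards [eventually_kktFilter_mem_SKKT] with q hq
    simp only [hq.1, Function.comp_apply, sub_sub_cancel]
  · refine (hvalue.add (isBigO_snd_prod'.trans hpert)).neg_left.congr_left fun q => ?_
    simp only [Function.comp_apply]
    abel

lemma MultMapCalm.exists_multiplier_isBigO (hM : MultMapCalm f g K xbar lambar)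
    (hf : ContDiffAt ℝ 2 f xbar) (hg : ContDiffAt ℝ 2 g xbar) :
    ∃ mult : (X × H) × X × H → H,
      (∀ᶠ q in kktFilter f g K xbar lambar, mult q ∈ Lambda f g K xbar) ∧
      (fun q => q.2.2 - mult q) =O[kktFilter f g K xbar lambar]
        fun q => (q.2.1 - xbar, q.1) := by
  obtain ⟨κ, -, ε, hε, δ, hδ, hcalm⟩ := hM
  have hpert_isBigO := multiplierPerturbation_isBigO (K := K) (lambar := lambar) hf hg
  have hpert : Tendsto (multiplierPerturbation f g xbar) (kktFilter f g K xbar lambar) (𝓝 0) := by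
    refine hpert_isBigO.trans_tendsto ?_
    exact (tendsto_sub_nhds_zero_iff.2 tendsto_primal_kktFilter).prodMk_nhds
      tendsto_perturbation_kktFilter
  have hexists : ∀ᶠ q in kktFilter f g K xbar lambar, ∃ lam₀, lam₀ ∈ Lambda f g K xbar ∧
      ‖q.2.2 - lam₀‖ ≤ κ * ‖multiplierPerturbation f g xbar q‖ := by
    filter_upwards [eventually_kktFilter_mem_SKKT, hpert.eventually (closedBall_mem_nhds _ hε),
      tendsto_dual_kktFilter.eventually (closedBall_mem_nhds _ hδ)] with q hq hq_pert hq_dual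
    exact hcalm _ (mem_closedBall_zero_iff.1 hq_pert) _
      ⟨mem_MultMap_multiplierPerturbation hq, hq_dual⟩
  choose! mult hmult using fun q (hq : ∃ lam₀, lam₀ ∈ Lambda f g K xbar ∧
    ‖q.2.2 - lam₀‖ ≤ κ * ‖multiplierPerturbation f g xbar q‖) => hq
  exact ⟨mult, hexists.mono fun q hq => (hmult q hq).1,
    (IsBigO.of_bound κ (hexists.mono fun q hq => (hmult q hq).2)).trans hpert_isBigO⟩

/-- Data obtained by rescaling, by `‖x - xbar‖⁻¹`, a family of perturbed KKT solutions for which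
`S_KKT` fails to be calm in the primal variable: the perturbation is negligible against
`x - xbar`, the rescaled primal displacement tends to `d`, and the rescaled distance of the dual
variable to a nearby multiplier `mult` tends to `mu`. -/
structure IsKKTBlowup (f : X → ℝ) (g : X → H) (K : Set H) (xbar : X) (lambar : H)
    (l : Filter ((X × H) × X × H)) (mult : (X × H) × X × H → H) (d : X) (mu : H) : Prop where
  le_kktFilter : l ≤ kktFilter f g K xbar lambar
  eventually_ne : ∀ᶠ q in l, q.2.1 - xbar ≠ 0
  isLittleO : (fun q => q.1) =o[l] fun q => q.2.1 - xbar
  eventually_mem_Lambda : ∀ᶠ q in l, mult q ∈ Lambda f g K xbar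
  tendsto_primal : Tendsto (fun q => ‖q.2.1 - xbar‖⁻¹ • (q.2.1 - xbar)) l (𝓝 d)
  tendsto_dual : Tendsto (fun q => ‖q.2.1 - xbar‖⁻¹ • (q.2.2 - mult q)) l (𝓝 mu)

lemma exists_isKKTBlowup_of_not_isBigO {mult : (X × H) × X × H → H}
    (hmult : ∀ᶠ q in kktFilter f g K xbar lambar, mult q ∈ Lambda f g K xbar)
    (hdual : (fun q => q.2.2 - mult q) =O[kktFilter f g K xbar lambar]
      fun q => (q.2.1 - xbar, q.1))
    (hprimal : ¬ (fun q => q.2.1 - xbar) =O[kktFilter f g K xbar lambar] fun q => q.1) :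
    ∃ (l : Filter ((X × H) × X × H)) (d : X) (mu : H),
      l.NeBot ∧ IsKKTBlowup f g K xbar lambar l mult d mu := by
  obtain ⟨l', hl', hl'_neBot, hlittleO, hne⟩ := exists_neBot_isLittleO_of_not_isBigO hprimal
  let l := Ultrafilter.of l'
  have hl : (l : Filter _) ≤ l' := Ultrafilter.of_le l'
  have hdual_primal : (fun q => q.2.2 - mult q) =O[(l : Filter _)] fun q => q.2.1 - xbar :=
    (hdual.mono (hl.trans hl')).trans
      ((isBigO_refl _ _).prod_left (hlittleO.isBigO.mono hl))
  obtain ⟨d, hd⟩ := exists_tendsto_ultrafilter_of_isBigO_one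
    (isBigO_one_inv_norm_smul (isBigO_refl (fun q : (X × H) × X × H => q.2.1 - xbar) l))
  obtain ⟨mu, hmu⟩ := exists_tendsto_ultrafilter_of_isBigO_one
    (isBigO_one_inv_norm_smul hdual_primal)
  exact ⟨l, d, mu, l.neBot, hl.trans hl', hl hne, hlittleO.mono hl, (hl.trans hl') hmult, hd, hmu⟩

namespace IsKKTBlowup

variable {l : Filter ((X × H) × X × H)} {mult : (X × H) × X × H → H} {d : X} {mu : H}

lemma eventually_mem_SKKT (hB : IsKKTBlowup f g K xbar lambar l mult d mu) :
    ∀ᶠ q in l, q.2 ∈ SKKT f g K q.1 :=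
  hB.le_kktFilter eventually_kktFilter_mem_SKKT

lemma eventually_pos (hB : IsKKTBlowup f g K xbar lambar l mult d mu) :
    ∀ᶠ q in l, 0 < ‖q.2.1 - xbar‖ :=
  hB.eventually_ne.mono fun _ hq => norm_pos_iff.2 hq

lemma direction_ne_zero [l.NeBot] (hB : IsKKTBlowup f g K xbar lambar l mult d mu) : d ≠ 0 := by
  have hunit : Tendsto (fun q => ‖‖q.2.1 - xbar‖⁻¹ • (q.2.1 - xbar)‖) l (𝓝 1) := by
    refine tendsto_const_nhds.congr' ?_
    filter_upwards [hB.eventually_ne] with q hq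
    exact (norm_smul_inv_norm (𝕜 := ℝ) hq).symm
  rintro rfl
  exact zero_ne_one (tendsto_nhds_unique (by simpa using hB.tendsto_primal.norm) hunit)

lemma tendsto_mult (hB : IsKKTBlowup f g K xbar lambar l mult d mu) :
    Tendsto mult l (𝓝 lambar) := by
  have hdist : Tendsto (fun q : (X × H) × X × H => ‖q.2.1 - xbar‖) l (𝓝 0) :=
    tendsto_norm_sub_self xbar |>.comp (tendsto_primal_kktFilter.mono_left hB.le_kktFilter)
  have hgap : Tendsto (fun q => q.2.2 - mult q) l (𝓝 0) := by
    have hprod := hdist.smul hB.tendsto_dual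
    rw [zero_smul] at hprod
    refine hprod.congr' ?_
    filter_upwards [hB.eventually_pos] with q hq
    exact smul_inv_smul₀ hq.ne' _
  simpa using (tendsto_dual_kktFilter.mono_left hB.le_kktFilter).sub hgap

lemma tendsto_smul_perturbation (hB : IsKKTBlowup f g K xbar lambar l mult d mu) :
    Tendsto (fun q => ‖q.2.1 - xbar‖⁻¹ • q.1) l (𝓝 0) :=
  hB.isLittleO.norm_right.tendsto_inv_smul_nhds_zero

lemma tendsto_value (hB : IsKKTBlowup f g K xbar lambar l mult d mu) (hg : ContinuousAt g xbar) :
    Tendsto (fun q => g q.2.1 + q.1.2) l (𝓝 (g xbar)) := by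
  have hgx := hg.tendsto.comp (tendsto_primal_kktFilter.mono_left hB.le_kktFilter)
  have hb := (continuous_snd.tendsto _).comp
    (tendsto_perturbation_kktFilter.mono_left hB.le_kktFilter)
  simpa using hgx.add hb

lemma tendsto_smul_value_sub (hB : IsKKTBlowup f g K xbar lambar l mult d mu)
    (hg : DifferentiableAt ℝ g xbar) :
    Tendsto (fun q => ‖q.2.1 - xbar‖⁻¹ • (g q.2.1 + q.1.2 - g xbar)) l
      (𝓝 (fderiv ℝ g xbar d)) := by
  have hgx := tendsto_smul_sub_of_hasFDerivAt hg.hasFDerivAt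
    (tendsto_primal_kktFilter.mono_left hB.le_kktFilter) hB.tendsto_primal
  have hb := (continuous_snd.tendsto _).comp hB.tendsto_smul_perturbation
  simpa [← smul_add, add_sub_right_comm] using hgx.add hb

lemma hessian_eq [l.NeBot] (hB : IsKKTBlowup f g K xbar lambar l mult d mu)
    (hf : ContDiffAt ℝ 2 f xbar) (hg : ContDiffAt ℝ 2 g xbar)
    (hlambar : gradLx f g xbar lambar = 0) :
    iteratedFDeriv ℝ 2 (fun x => f x + ⟪lambar, g x⟫) xbar ![d, d] =
      -⟪mu, fderiv ℝ g xbar d⟫ := by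
  have hx := tendsto_primal_kktFilter.mono_left hB.le_kktFilter
  have hpert := ((continuous_fst.tendsto _).comp hB.tendsto_smul_perturbation).inner (𝕜 := ℝ)
    (tendsto_const_nhds (x := d))
  have hjac_cont : ContinuousAt (fun x => fderiv ℝ g x d) xbar :=
    (hasFDerivAt_fderiv_of_contDiffAt_two hg).continuousAt.clm_apply continuousAt_const
  have hjac : Tendsto (fun q : (X × H) × X × H => fderiv ℝ g q.2.1 d) l
      (𝓝 (fderiv ℝ g xbar d)) := hjac_cont.tendsto.comp hx
  have hdual := hB.tendsto_dual.inner (𝕜 := ℝ) hjac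
  have hmixed := (tendsto_sub_nhds_zero_iff.2 hB.tendsto_mult).inner (𝕜 := ℝ)
    (tendsto_smul_fderiv_sub_apply hg hx hB.tendsto_primal (tendsto_const_nhds (x := d)))
  have hlim := (hpert.sub hdual).sub hmixed
  simp only [Prod.fst_zero, inner_zero_left, zero_sub, sub_zero] at hlim
  refine tendsto_nhds_unique
    (tendsto_smul_inner_gradLx_sub hf hg lambar hx hB.tendsto_primal) (hlim.congr' ?_)
  filter_upwards [hB.eventually_mem_SKKT, hB.eventually_mem_Lambda] with q hq hq_mult
  rw [inner_gradLx_sub_of_gradLx_eq_zero q.2.1 q.2.2 d hlambar hq_mult.1, ← hq.1]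
  simp only [Function.comp_apply, Prod.smul_fst, real_inner_smul_left, inner_smul_right,
    smul_eq_mul]
  ring

lemma not_pointwiseSOSC [l.NeBot] (hB : IsKKTBlowup f g K xbar lambar l mult d mu)
    (hf : ContDiffAt ℝ 2 f xbar) (hg : ContDiffAt ℝ 2 g xbar)
    (hK : HasConicParametrizationAt K (g xbar)) (hlambar : lambar ∈ Lambda f g K xbar) :
    ¬ PointwiseSOSC f g K xbar lambar := by
  intro hSOSC
  have hvalue := hB.tendsto_value hg.continuousAt
  have hslope := hB.tendsto_smul_value_sub (hg.differentiableAt two_ne_zero)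
  have hdual := tendsto_dual_kktFilter.mono_left hB.le_kktFilter
  have hnormal : ∀ᶠ q in l, q.2.2 ∈ normalCone K (g q.2.1 + q.1.2) :=
    hB.eventually_mem_SKKT.mono fun _ hq => hq.2
  have htangent := mem_posTangentConeAt_of_tendsto hB.eventually_pos hvalue
    (hnormal.mono fun _ hq => hq.1) hslope
  have horth := inner_eq_zero_of_tendsto_normalCone hB.eventually_pos hvalue hslope hdual hnormal
    hlambar.2
  obtain ⟨w, hw, hle⟩ := hK.exists_secondTangent_neg_inner_le hB.eventually_pos hvalue hslope hdual
    hnormal (hB.eventually_mem_Lambda.mono fun _ hq => hq.2) hB.tendsto_dual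
  have hlt := hSOSC d hB.direction_ne_zero htangent horth w hw
  rw [hB.hessian_eq hf hg hlambar.1] at hlt
  linarith

end IsKKTBlowup

end KKT

theorem multCalm_SOSC_implies_semiIsolatedCalm_general
    {f : X → ℝ} {g : X → H} {K : Set H} {xbar : X} {lambar : H}
    (hf : ContDiffAt ℝ 2 f xbar) (hg : ContDiffAt ℝ 2 g xbar)
    (hK : HasConicParametrizationAt K (g xbar)) (hlambar : lambar ∈ Lambda f g K xbar)
    (hMcalm : MultMapCalm f g K xbar lambar) (hSOSC : PointwiseSOSC f g K xbar lambar) :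
    SemiIsolatedCalm f g K xbar lambar := by
  obtain ⟨mult, hmult, hdual⟩ := hMcalm.exists_multiplier_isBigO hf hg
  have hprimal : (fun q => q.2.1 - xbar) =O[kktFilter f g K xbar lambar] fun q => q.1 := by
    by_contra hnot
    obtain ⟨l, d, mu, _, hB⟩ := exists_isKKTBlowup_of_not_isBigO hmult hdual hnot
    exact hB.not_pointwiseSOSC hf hg hK hlambar hSOSC
  exact .of_isBigO hmult
    (hprimal.prod_left (hdual.trans (hprimal.prod_left (isBigO_refl _ _))))

/-- **Proposition 2.2.** Calmness of the multiplier mapping together with the SOSC implies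
semi-isolated calmness of the KKT solution mapping. -/
theorem multCalm_SOSC_implies_semiIsolatedCalm
    (f : X → ℝ) (g : X → H) (K : Set H)
    (hf : ContDiff ℝ 2 f) (hg : ContDiff ℝ 2 g)
    (hKne : K.Nonempty) (hKcl : IsClosed K) (hKconv : Convex ℝ K)
    (hKred : C2ConeReducible K)
    (xbar : X) (lambar : H)
    (hKKT : gradLx f g xbar lambar = 0 ∧ lambar ∈ normalCone K (g xbar))
    (hMcalm : MultMapCalm f g K xbar lambar)
    (hSOSC : SOSC f g K xbar lambar) :
    SemiIsolatedCalm f g K xbar lambar :=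
  multCalm_SOSC_implies_semiIsolatedCalm_general hf.contDiffAt hg.contDiffAt
    (hKred.hasConicParametrizationAt hKKT.2.1) hKKT hMcalm (hSOSC.pointwiseSOSC hKKT.2)
end
end

section
/- Let f : X → ℝ and g : X → H be continuously differentiable and K ⊆ H a nonempty closed convex set. For every c > 0 the augmented Lagrangian 𝓛(·, ·, c) is differentiable on X × H, with partial gradients ∇_x 𝓛(x, λ, c) = ∇f(x) + c·∇g(x)*[g(x) + c⁻¹λ − Π_K(g(x) + c⁻¹λ)] and ∇_λ 𝓛(x, λ, c) = g(x) − Π_K(g(x) + c⁻¹λ). -/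
open Metric Set Filter Topology Asymptotics
open scoped RealInnerProductSpace

noncomputable section

variable {X H : Type*} [NormedAddCommGroup X] [InnerProductSpace ℝ X] [FiniteDimensional ℝ X]
variable [NormedAddCommGroup H] [InnerProductSpace ℝ H] [FiniteDimensional ℝ H]

/-! The squared distance to a convex set `K` is differentiable because it is trapped between two
quadratics: if `p` is the point of `K` nearest to `y`, then
`d(y)² + 2⟪y - p, h⟫ ≤ d(y + h)² ≤ d(y)² + 2⟪y - p, h⟫ + ‖h‖²`.
The upper bound measures the distance to `p`; the lower bound replaces `K` by the half-space
`{z | ⟪y - p, z - p⟫ ≤ 0}`, which contains it. Hence the gradient of `d²` at `y` is `2 (y - p)`, and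
the chain rule gives the derivative of the augmented Lagrangian; in the multiplier direction the
term `c⁻¹ λ` of `y - p` cancels against the derivative of `‖λ‖² / (2c)`. -/

section NearestPoint

/-- `p` is a nearest point of `K` to `y`, i.e. a value at `y` of the (a priori multivalued) metric
projection onto `K`. -/
def IsNearestPoint {F : Type*} [SeminormedAddCommGroup F] (K : Set F) (y p : F) : Prop :=
  p ∈ K ∧ ∀ z ∈ K, ‖y - p‖ ≤ ‖y - z‖

namespace IsNearestPoint

theorem infDist_eq {F : Type*} [SeminormedAddCommGroup F] {K : Set F} {y p : F}
    (hp : IsNearestPoint K y p) : infDist y K = ‖y - p‖ := by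
  refine le_antisymm ?_ ((le_infDist ⟨p, hp.1⟩).2 fun z hz => ?_)
  · exact dist_eq_norm y p ▸ infDist_le_dist_of_mem hp.1
  · exact dist_eq_norm y z ▸ hp.2 z hz

variable {F : Type*} [NormedAddCommGroup F] [InnerProductSpace ℝ F] {K : Set F} {y p : F}

theorem inner_sub_sub_nonpos (hp : IsNearestPoint K y p) (hK : Convex ℝ K) {z : F} (hz : z ∈ K) :
    ⟪y - p, z - p⟫ ≤ 0 := by
  have hmin : IsMinOn (fun w => ‖y - w‖) K p := hp.2
  exact (norm_eq_iInf_iff_real_inner_le_zero hK hp.1).1 (hmin.iInf_eq hp.1).symm z hz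

theorem infDist_add_sq_le (hp : IsNearestPoint K y p) (h : F) :
    infDist (y + h) K ^ 2 ≤ infDist y K ^ 2 + 2 * ⟪y - p, h⟫ + ‖h‖ ^ 2 :=
  calc
    infDist (y + h) K ^ 2 ≤ dist (y + h) p ^ 2 :=
      pow_le_pow_left₀ infDist_nonneg (infDist_le_dist_of_mem hp.1) 2
    _ = ‖(y - p) + h‖ ^ 2 := by rw [dist_eq_norm, add_sub_right_comm]
    _ = infDist y K ^ 2 + 2 * ⟪y - p, h⟫ + ‖h‖ ^ 2 := by rw [norm_add_sq_real, hp.infDist_eq]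

theorem le_infDist_add_sq (hp : IsNearestPoint K y p) (hK : Convex ℝ K) (h : F) :
    infDist y K ^ 2 + 2 * ⟪y - p, h⟫ ≤ infDist (y + h) K ^ 2 := by
  rw [← Real.sqrt_le_left infDist_nonneg, le_infDist ⟨p, hp.1⟩]
  intro z hz
  refine Real.sqrt_le_iff.2 ⟨dist_nonneg, ?_⟩
  have hinner : ⟪y - p, z - p⟫ ≤ 0 := hp.inner_sub_sub_nonpos hK hz
  calc
    infDist y K ^ 2 + 2 * ⟪y - p, h⟫
      ≤ ‖y - p‖ ^ 2 + 2 * (⟪y - p, h⟫ - ⟪y - p, z - p⟫) + ‖h - (z - p)‖ ^ 2 := by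
        rw [hp.infDist_eq]
        linarith [sq_nonneg ‖h - (z - p)‖]
    _ = ‖(y - p) + (h - (z - p))‖ ^ 2 := by rw [norm_add_sq_real, inner_sub_right _ h]
    _ = dist (y + h) z ^ 2 := by
        rw [dist_eq_norm]
        congr 2
        abel

theorem hasFDerivAt_infDist_sq (hp : IsNearestPoint K y p) (hK : Convex ℝ K) :
    HasFDerivAt (fun z => infDist z K ^ 2) ((2 : ℝ) • innerSL ℝ (y - p)) y := by
  rw [hasFDerivAt_iff_isLittleO_nhds_zero]
  refine (IsBigO.of_norm_le fun h => ?_).trans_isLittleO (isLittleO_norm_pow_id one_lt_two)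
  have lower := hp.le_infDist_add_sq hK h
  have upper := hp.infDist_add_sq_le h
  simp only [smul_apply, innerSL_apply_apply, smul_eq_mul]
  rw [Real.norm_of_nonneg (by linarith)]
  linarith

end IsNearestPoint

end NearestPoint

section AugmentedLagrangian

variable {E F : Type*} [NormedAddCommGroup F] [InnerProductSpace ℝ F]
  {f : E → ℝ} {g : E → F} {K : Set F} {x : E} {lam p : F} {c : ℝ}

theorem hasFDerivAt_augLag [NormedAddCommGroup E] [NormedSpace ℝ E]
    {f' : E →L[ℝ] ℝ} {g' : E →L[ℝ] F} (hf : HasFDerivAt f f' x) (hg : HasFDerivAt g g' x)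
    (hK : Convex ℝ K) (hp : IsNearestPoint K (g x + c⁻¹ • lam) p) (hc : c ≠ 0) :
    HasFDerivAt (fun q : E × F => augLag f g K q.1 q.2 c)
      ((f' + c • innerSL ℝ (g x + c⁻¹ • lam - p) ∘L g').coprod (innerSL ℝ (g x - p))) (x, lam) := by
  have hfst : HasFDerivAt Prod.fst (.fst ℝ E F) (x, lam) := hasFDerivAt_fst
  have hsnd : HasFDerivAt Prod.snd (.snd ℝ E F) (x, lam) := hasFDerivAt_snd
  have hshift : HasFDerivAt (fun q : E × F => g q.1 + c⁻¹ • q.2) _ (x, lam) :=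
    (hg.comp (x, lam) hfst).add (hsnd.const_smul c⁻¹)
  have hdist := (hp.hasFDerivAt_infDist_sq hK).comp (x, lam) hshift
  refine (((hf.comp (x, lam) hfst).add (hdist.const_mul (c / 2))).sub
    (hsnd.norm_sq.const_mul (1 / (2 * c)))).congr_fderiv ?_
  refine ContinuousLinearMap.ext fun ⟨u, w⟩ => ?_
  have hcancel : g x - p = (g x + c⁻¹ • lam - p) - c⁻¹ • lam := by abel
  change f' u + c / 2 * (2 * ⟪g x + c⁻¹ • lam - p, g' u + c⁻¹ • w⟫) - 1 / (2 * c) * (2 • ⟪lam, w⟫) =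
    f' u + c * ⟪g x + c⁻¹ • lam - p, g' u⟫ + ⟪g x - p, w⟫
  rw [hcancel, inner_sub_left _ (c⁻¹ • lam), inner_add_right, real_inner_smul_left,
    real_inner_smul_right, two_nsmul]
  field_simp
  ring

theorem hasGradientAt_augLag_left [NormedAddCommGroup E] [InnerProductSpace ℝ E]
    [CompleteSpace E] [CompleteSpace F] {f' : E} {g' : E →L[ℝ] F}
    (hf : HasGradientAt f f' x) (hg : HasFDerivAt g g' x) (hK : Convex ℝ K)
    (hp : IsNearestPoint K (g x + c⁻¹ • lam) p) (hc : c ≠ 0) :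
    HasGradientAt (fun x' => augLag f g K x' lam c)
      (f' + c • ContinuousLinearMap.adjoint g' (g x + c⁻¹ • lam - p)) x := by
  have hjoint := hasFDerivAt_augLag hf.hasFDerivAt hg hK hp hc
  have hslice : HasFDerivAt (fun x' => (x', lam)) (.inl ℝ E F) x := hasFDerivAt_prodMk_left x lam
  refine (hjoint.comp x hslice).congr_fderiv ?_
  ext w
  simp [ContinuousLinearMap.adjoint_inner_left]

theorem hasGradientAt_augLag_right [CompleteSpace F] (hK : Convex ℝ K)
    (hp : IsNearestPoint K (g x + c⁻¹ • lam) p) (hc : c ≠ 0) :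
    HasGradientAt (fun lam' => augLag f g K x lam' c) (g x - p) lam := by
  -- With `x` fixed, `f` and `g` may be replaced by constant functions on any space, such as `ℝ`.
  have hjoint := hasFDerivAt_augLag (hasFDerivAt_const (f x) (0 : ℝ))
    (hasFDerivAt_const (g x) (0 : ℝ)) hK hp hc
  refine (hjoint.comp lam (hasFDerivAt_prodMk_right 0 lam)).congr_fderiv ?_
  ext w
  simp

theorem augLag_differentiable_and_gradients_general [NormedAddCommGroup E]
    [InnerProductSpace ℝ E] [CompleteSpace E] [CompleteSpace F]
    (hf : Differentiable ℝ f) (hg : Differentiable ℝ g) (hK : Convex ℝ K)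
    {projK : F → F} (hproj : ∀ y, IsNearestPoint K y (projK y)) (hc : c ≠ 0) :
    Differentiable ℝ (fun q : E × F => augLag f g K q.1 q.2 c) ∧
    (∀ x lam, gradient (fun x' => augLag f g K x' lam c) x =
      gradient f x + c • (ContinuousLinearMap.adjoint (fderiv ℝ g x)
        (g x + c⁻¹ • lam - projK (g x + c⁻¹ • lam)))) ∧
    (∀ x lam, gradient (fun lam' => augLag f g K x lam' c) lam =
      g x - projK (g x + c⁻¹ • lam)) := by
  refine ⟨fun ⟨x, lam⟩ => ?_, fun x lam => ?_, fun x lam => ?_⟩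
  · exact (hasFDerivAt_augLag (hf x).hasFDerivAt (hg x).hasFDerivAt hK
      (hproj _) hc).differentiableAt
  · exact (hasGradientAt_augLag_left (hf x).hasGradientAt (hg x).hasFDerivAt hK
      (hproj _) hc).gradient
  · exact (hasGradientAt_augLag_right hK (hproj _) hc).gradient

end AugmentedLagrangian

/-- Differentiability of the augmented Lagrangian and its partial gradients (formula (2.3)). -/
theorem augLag_differentiable_and_gradients
    (f : X → ℝ) (g : X → H) (K : Set H)
    (hf : ContDiff ℝ 1 f) (hg : ContDiff ℝ 1 g)
    (hKne : K.Nonempty) (hKcl : IsClosed K) (hKconv : Convex ℝ K)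
    (projK : H → H)
    (hproj : ∀ y : H, projK y ∈ K ∧ ∀ z ∈ K, ‖y - projK y‖ ≤ ‖y - z‖)
    (c : ℝ) (hc : 0 < c) :
    Differentiable ℝ (fun p : X × H => augLag f g K p.1 p.2 c) ∧
    (∀ x : X, ∀ lam : H, gradient (fun x' => augLag f g K x' lam c) x =
      gradient f x + c • (ContinuousLinearMap.adjoint (fderiv ℝ g x)
        (g x + c⁻¹ • lam - projK (g x + c⁻¹ • lam)))) ∧
    (∀ x : X, ∀ lam : H, gradient (fun lam' => augLag f g K x lam' c) lam =
      g x - projK (g x + c⁻¹ • lam)) := by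
  exact augLag_differentiable_and_gradients_general (hf.differentiable one_ne_zero)
    (hg.differentiable one_ne_zero) hKconv hproj hc.ne'
end
end

section
/- Let K ⊆ H be a nonempty closed convex set, f : X → ℝ, g : X → H, and c > 0. Then for every fixed x ∈ X, the function λ ↦ 𝓛(x, λ, c) = f(x) + (c/2)·dist²(g(x) + c⁻¹λ, K) − (1/(2c))‖λ‖² is concave on H. -/
open Metric Set Filter Topology Asymptotics
open scoped RealInnerProductSpace

noncomputable section

variable {X H : Type*} [NormedAddCommGroup X] [InnerProductSpace ℝ X] [FiniteDimensional ℝ X]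
variable [NormedAddCommGroup H] [InnerProductSpace ℝ H] [FiniteDimensional ℝ H]

/-!
For any nonempty set `K`, the function `y ↦ dist(y, K)² − ‖y‖²` is the infimum over `z ∈ K` of
`y ↦ ‖y − z‖² − ‖y‖² = ‖z‖² − 2⟪z, y⟫`, hence concave as an infimum of affine functions.
Expanding `‖g(x) + c⁻¹λ‖²` shows that the augmented Lagrangian is this function, scaled by `c / 2`
and evaluated at `g(x) + c⁻¹λ`, plus an affine function of `λ`.
-/

theorem concaveOn_of_isGLB {𝕜 E β : Type*} {ι : Sort*} [Semiring 𝕜] [PartialOrder 𝕜]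
    [AddCommMonoid E] [AddCommMonoid β] [PartialOrder β] [IsOrderedAddMonoid β] [SMul 𝕜 E]
    [Module 𝕜 β] [PosSMulMono 𝕜 β] {s : Set E} {F : ι → E → β} {f : E → β} (hs : Convex 𝕜 s)
    (hF : ∀ i, ConcaveOn 𝕜 s (F i)) (hf : ∀ x ∈ s, IsGLB (range fun i => F i x) (f x)) :
    ConcaveOn 𝕜 s f := by
  refine ⟨hs, fun x hx y hy a b ha hb hab => ?_⟩
  refine (hf _ (hs hx hy ha hb hab)).2 (forall_mem_range.2 fun i => ?_)
  have f_le_F : ∀ w ∈ s, f w ≤ F i w := fun w hw => (hf w hw).1 (mem_range_self i)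
  calc a • f x + b • f y ≤ a • F i x + b • F i y := by
        gcongr
        exacts [f_le_F x hx, f_le_F y hy]
    _ ≤ F i (a • x + b • y) := (hF i).2 hx hy ha hb hab

theorem le_infDist_sq {α : Type*} [PseudoMetricSpace α] {s : Set α} {x : α} {r : ℝ}
    (hs : s.Nonempty) : r ≤ infDist x s ^ 2 ↔ ∀ ⦃y⦄, y ∈ s → r ≤ dist x y ^ 2 := by
  simp only [← Real.sqrt_le_left infDist_nonneg, ← Real.sqrt_le_left dist_nonneg, le_infDist hs]

theorem isGLB_dist_sq_sub {α : Type*} [PseudoMetricSpace α] {s : Set α} (hs : s.Nonempty) (x : α)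
    (t : ℝ) : IsGLB (range fun y : s => dist x y ^ 2 - t) (infDist x s ^ 2 - t) := by
  refine isGLB_iff_le_iff.2 fun r => ?_
  simp only [mem_lowerBounds, forall_mem_range, Subtype.forall, le_sub_iff_add_le,
    le_infDist_sq hs]

section InnerProductSpace

variable {E : Type*} [SeminormedAddCommGroup E] [InnerProductSpace ℝ E]

theorem dist_sq_sub_norm_sq_eq (y z : E) :
    dist y z ^ 2 - ‖y‖ ^ 2 = ‖z‖ ^ 2 - 2 * ⟪z, y⟫ := by
  rw [dist_eq_norm, norm_sub_sq_real, real_inner_comm]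
  ring

theorem concaveOn_dist_sq_sub_norm_sq (z : E) :
    ConcaveOn ℝ univ fun y => dist y z ^ 2 - ‖y‖ ^ 2 := by
  have affine_concave : ConcaveOn ℝ univ fun y => ((-2 : ℝ) • innerₗ E z) y + ‖z‖ ^ 2 :=
    (((-2 : ℝ) • innerₗ E z).concaveOn convex_univ).add_const _
  refine affine_concave.congr fun y _ => ?_
  simp only [dist_sq_sub_norm_sq_eq, LinearMap.smul_apply, innerₗ_apply_apply, smul_eq_mul]
  ring

theorem concaveOn_infDist_sq_sub_norm_sq {K : Set E} (hK : K.Nonempty) :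
    ConcaveOn ℝ univ fun y => infDist y K ^ 2 - ‖y‖ ^ 2 :=
  concaveOn_of_isGLB convex_univ (fun z : K => concaveOn_dist_sq_sub_norm_sq (z : E))
    fun y _ => isGLB_dist_sq_sub hK y _

theorem half_mul_norm_add_inv_smul_sq {c : ℝ} (hc : c ≠ 0) (p lam : E) :
    c / 2 * ‖p + c⁻¹ • lam‖ ^ 2 = c / 2 * ‖p‖ ^ 2 + ⟪p, lam⟫ + 1 / (2 * c) * ‖lam‖ ^ 2 := by
  rw [norm_add_sq_real, norm_smul, inner_smul_right, mul_pow, Real.norm_eq_abs, sq_abs]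
  field_simp

theorem augLag_concaveOn_general {α : Type*} (f : α → ℝ) (g : α → E) {K : Set E}
    (hK : K.Nonempty) {c : ℝ} (hc : 0 < c) (x : α) :
    ConcaveOn ℝ univ fun lam : E =>
      f x + c / 2 * infDist (g x + c⁻¹ • lam) K ^ 2 - 1 / (2 * c) * ‖lam‖ ^ 2 := by
  let shift : E →ᵃ[ℝ] E :=
    AffineMap.const ℝ E (g x) + (c⁻¹ • LinearMap.id : E →ₗ[ℝ] E).toAffineMap
  have shift_concave :
      ConcaveOn ℝ univ fun lam => infDist (shift lam) K ^ 2 - ‖shift lam‖ ^ 2 :=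
    (concaveOn_infDist_sq_sub_norm_sq hK).comp_affineMap shift
  have inner_concave : ConcaveOn ℝ univ (innerₗ E (g x)) := (innerₗ E (g x)).concaveOn convex_univ
  refine (((shift_concave.smul (half_pos hc).le).add inner_concave).add_const
    (f x + c / 2 * ‖g x‖ ^ 2)).congr fun lam _ => ?_
  have shift_apply : shift lam = g x + c⁻¹ • lam := rfl
  simp only [Pi.add_apply, shift_apply, innerₗ_apply_apply, smul_eq_mul]
  linear_combination -half_mul_norm_add_inv_smul_sq hc.ne' (g x) lam

end InnerProductSpace

/-- The augmented Lagrangian is concave in the multiplier variable. -/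
theorem augLag_concaveOn
    (f : X → ℝ) (g : X → H) (K : Set H)
    (hKne : K.Nonempty) (hKcl : IsClosed K) (hKconv : Convex ℝ K)
    (c : ℝ) (hc : 0 < c) (x : X) :
    ConcaveOn ℝ Set.univ (fun lam : H => augLag f g K x lam c) :=
  augLag_concaveOn_general f g hKne hc x
end
end
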